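/- arXiv:1106.4737 — 4 statements merged into one kernel-verified Lean document; each statement's English description precedes it below -/
import Mathlib

section
/- Let d(t) := 1 − 2t + t² − exp(t), a(t) := exp(t) + 2t − t² − 1, and let Λ(t) be the explicit real symmetric 4×4 matrix Λ(t) := (1/d(t))·N(t) described in the context. For t > 0 small enough that Λ(t) is invertible and positive definite, define J(t) := (1/(π⁶ · a(t) · det Λ(t))) · ∫_{ℂ⁴} | |v₁|² − |v₂|² | · | |v₃|² − |v₄|² | · exp(−Σ_{j,k} (Λ(t)⁻¹)_{jk} v_k · conj(v_j)) dv, where dv is Lebesgue measure on ℂ⁴ ≅ ℝ⁸. Then there exist δ > 0 and C > 0 such that for all t ∈ (0, δ), |J(t) − 2/(3π²)| ≤ C·t; in particular J(t) → 2/(3π²) as t → 0⁺. -/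
open Real Matrix MeasureTheory

/-- `d(t) = 1 − 2t + t² − exp(t)`. -/
noncomputable def dd (t : ℝ) : ℝ := 1 - 2*t + t^2 - Real.exp t

/-- `a(t) = exp(t) + 2t − t² − 1`. -/
noncomputable def aa (t : ℝ) : ℝ := Real.exp t + 2*t - t^2 - 1

/-- The numerator matrix `N(t)`. -/
noncomputable def NN (t : ℝ) : Matrix (Fin 4) (Fin 4) ℝ :=
  !![-2*Real.exp t + 2 - 2*t^2 + t^3, t*(t-2),
     4*t*Real.exp t - 4*t + 3*t^2 - t^3 - t^2*Real.exp t - 2*Real.exp t + 2, t*(t-1-Real.exp t);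
     t*(t-2), -Real.exp t + 1 - t + t^2, t*(t-1-Real.exp t), -Real.exp t + 1 - t;
     4*t*Real.exp t - 4*t + 3*t^2 - t^3 - t^2*Real.exp t - 2*Real.exp t + 2, t*(t-1-Real.exp t),
     Real.exp t * (-2*Real.exp t + 2 - 2*t^2 + t^3), t*(t-2)*Real.exp t;
     t*(t-1-Real.exp t), -Real.exp t + 1 - t, t*(t-2)*Real.exp t,
     Real.exp t * (-Real.exp t + 1 - t + t^2)]

/-- `Λ(t) = (1/d(t)) · N(t)`. -/
noncomputable def Lam (t : ℝ) : Matrix (Fin 4) (Fin 4) ℝ := (1 / dd t) • NN t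

/-- The scaled two-point correlation integral `J(t)`. -/
noncomputable def J (t : ℝ) : ℝ :=
  (1 / (Real.pi ^ 6 * aa t * (Lam t).det)) *
    ∫ v : Fin 4 → ℂ,
      |‖v 0‖^2 - ‖v 1‖^2| * |‖v 2‖^2 - ‖v 3‖^2| *
        Real.exp (-(∑ j : Fin 4, ∑ k : Fin 4, (Lam t)⁻¹ j k * (v k * (starRingEnd ℂ) (v j)).re))

/-! ### Moments of the standard complex Gaussian on `ℂ` -/

lemma norm_moment (m : ℕ) :
    ∫ z : ℂ, ‖z‖ ^ m * Real.exp (-‖z‖ ^ 2) = π * Real.Gamma ((m + 2) / 2) := by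
  have h := Complex.integral_rpow_mul_exp_neg_rpow (p := 2) (q := m) (by norm_num)
    (by have : (0:ℝ) ≤ m := Nat.cast_nonneg m
        linarith)
  norm_num at h
  exact h

lemma norm_moment_integrable (m : ℕ) :
    Integrable (fun z : ℂ => ‖z‖ ^ m * Real.exp (-‖z‖ ^ 2)) := by
  apply Integrable.of_integral_ne_zero
  rw [norm_moment]
  have : 0 < Real.Gamma (((m:ℝ) + 2) / 2) := Real.Gamma_pos_of_pos (by positivity)
  positivity

/-- The monomial weight `z^m conj(z)^n exp(-|z|²)`. -/
noncomputable def gw (m n : ℕ) (z : ℂ) : ℂ :=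
  z ^ m * (starRingEnd ℂ z) ^ n * ((Real.exp (-‖z‖ ^ 2) : ℝ) : ℂ)

lemma gw_integrable (m n : ℕ) : Integrable (gw m n) := by
  refine (norm_moment_integrable (m + n)).mono' ?_ (Filter.Eventually.of_forall fun z => ?_)
  · apply Continuous.aestronglyMeasurable
    unfold gw
    fun_prop
  · simp only [gw, norm_mul, norm_pow, RCLike.norm_conj, Complex.norm_real, Real.norm_eq_abs,
      abs_of_pos (Real.exp_pos _)]
    rw [pow_add]

lemma gw_diag (m : ℕ) : ∫ z : ℂ, gw m m z = π * (m.factorial : ℂ) := by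
  have h1 : ∀ z : ℂ, gw m m z = ((‖z‖ ^ (2 * m) * Real.exp (-‖z‖ ^ 2) : ℝ) : ℂ) := by
    intro z
    unfold gw
    rw [← mul_pow, Complex.mul_conj, Complex.normSq_eq_norm_sq]
    push_cast
    ring
  simp_rw [h1]
  rw [integral_complex_ofReal, norm_moment]
  have : (((2 * m : ℕ) : ℝ) + 2) / 2 = (m : ℝ) + 1 := by push_cast; ring
  rw [this, Real.Gamma_nat_eq_factorial]
  push_cast
  ring

lemma gw_off (m n : ℕ) (hm : m ≤ 2) (hn : n ≤ 2) (h : m ≠ n) : ∫ z : ℂ, gw m n z = 0 := by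
  obtain ⟨w, hw⟩ : ∃ w : Circle, (w : ℂ) = Complex.I :=
    ⟨Circle.exp (π / 2), by rw [Circle.coe_exp]; push_cast; exact Complex.exp_pi_div_two_mul_I⟩
  have h1 := ((rotation w).measurePreserving).integral_comp
      (rotation w).toHomeomorph.measurableEmbedding (gw m n)
  have h2 : ∀ z : ℂ, gw m n (rotation w z)
      = (Complex.I ^ m * (-Complex.I) ^ n) * gw m n z := by
    intro z
    simp only [gw, rotation_apply, hw, norm_mul, Complex.norm_I, one_mul, map_mul, Complex.conj_I]
    ring
  simp_rw [h2] at h1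
  rw [integral_const_mul] at h1
  have h4 : (Complex.I ^ m * (-Complex.I) ^ n - 1) ≠ 0 := by
    interval_cases m <;> interval_cases n <;> first | (exact absurd rfl h) | skip
    all_goals
      intro h
      have h5 := congrArg Complex.re h
      simp [pow_two] at h5
    all_goals norm_num at h5
  have h6 : (Complex.I ^ m * (-Complex.I) ^ n - 1) * ∫ z : ℂ, gw m n z = 0 := by
    rw [sub_mul, h1]; ring
  exact (mul_eq_zero.1 h6).resolve_left h4

/-- Indicator count. -/
def ct (a c k : Fin 4) : ℕ := (if a = k then 1 else 0) + (if c = k then 1 else 0)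

lemma ct_le (a c k : Fin 4) : ct a c k ≤ 2 := by
  unfold ct; split_ifs <;> norm_num

lemma comb : ∀ a b c d : Fin 4,
    (∏ k : Fin 4, (if ct a c k = ct b d k then (ct a c k).factorial else 0) : ℕ)
      = (if a = b then 1 else 0) * (if c = d then 1 else 0)
        + (if a = d then 1 else 0) * (if b = c then 1 else 0) := by
  decide

/-- The standard Gaussian weight. -/
noncomputable def gauss (z : Fin 4 → ℂ) : ℝ := Real.exp (-∑ k, ‖z k‖ ^ 2)

lemma mono_eq (a b c d : Fin 4) (z : Fin 4 → ℂ) :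
    z a * starRingEnd ℂ (z b) * (z c * starRingEnd ℂ (z d)) * (gauss z : ℂ)
      = ∏ k, gw (ct a c k) (ct b d k) (z k) := by
  unfold gw gauss
  rw [Finset.prod_mul_distrib, Finset.prod_mul_distrib]
  have h1 : ∏ k, z k ^ ct a c k = z a * z c := by
    simp only [ct, pow_add, Finset.prod_mul_distrib, pow_ite, pow_one, pow_zero,
      Finset.prod_ite_eq, Finset.mem_univ, if_true]
  have h2 : ∏ k, (starRingEnd ℂ (z k)) ^ ct b d k
      = starRingEnd ℂ (z b) * starRingEnd ℂ (z d) := by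
    simp only [ct, pow_add, Finset.prod_mul_distrib, pow_ite, pow_one, pow_zero,
      Finset.prod_ite_eq, Finset.mem_univ, if_true]
  rw [h1, h2, ← Finset.sum_neg_distrib, Real.exp_sum]
  push_cast
  ring

lemma mono_integrable (a b c d : Fin 4) :
    Integrable (fun z : Fin 4 → ℂ =>
      z a * starRingEnd ℂ (z b) * (z c * starRingEnd ℂ (z d)) * (gauss z : ℂ)) := by
  simp_rw [mono_eq]
  exact Integrable.fintype_prod (fun k => gw_integrable _ _)

lemma mono_integral (a b c d : Fin 4) :
    ∫ z : Fin 4 → ℂ, z a * starRingEnd ℂ (z b) * (z c * starRingEnd ℂ (z d)) * (gauss z : ℂ)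
      = π ^ 4 * ((if a = b then 1 else 0) * (if c = d then 1 else 0)
        + (if a = d then 1 else 0) * (if b = c then 1 else 0)) := by
  simp_rw [mono_eq]
  rw [integral_fintype_prod_volume_eq_prod]
  have h : ∀ k : Fin 4, ∫ x : ℂ, gw (ct a c k) (ct b d k) x
      = (π : ℂ) * ((if ct a c k = ct b d k then (ct a c k).factorial else 0 : ℕ) : ℂ) := by
    intro k
    split_ifs with h
    · rw [← h, gw_diag]
    · rw [gw_off _ _ (ct_le _ _ _) (ct_le _ _ _) h]; simp
  simp_rw [h]
  rw [Finset.prod_mul_distrib, ← Nat.cast_prod, comb]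
  simp

/-- Fourth moments of linear images. -/
lemma quad_eq (M : Matrix (Fin 4) (Fin 4) ℝ) (i j : Fin 4) (z : Fin 4 → ℂ) :
    ((‖∑ a, (M i a : ℂ) * z a‖ ^ 2 * ‖∑ a, (M j a : ℂ) * z a‖ ^ 2 * gauss z : ℝ) : ℂ)
      = ∑ a, ∑ b, ∑ c, ∑ d, ((M i a * M i b * M j c * M j d : ℝ) : ℂ) *
        (z a * starRingEnd ℂ (z b) * (z c * starRingEnd ℂ (z d)) * (gauss z : ℂ)) := by
  have h : ∀ i, ((‖∑ a, (M i a : ℂ) * z a‖ ^ 2 : ℝ) : ℂ)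
      = ∑ a, ∑ b, (M i a : ℂ) * M i b * (z a * starRingEnd ℂ (z b)) := by
    intro i
    rw [← Complex.normSq_eq_norm_sq, ← Complex.mul_conj, map_sum, Finset.sum_mul_sum]
    refine Finset.sum_congr rfl fun a _ => Finset.sum_congr rfl fun b _ => ?_
    rw [map_mul, Complex.conj_ofReal]; ring
  rw [Complex.ofReal_mul, Complex.ofReal_mul, h, h, mul_comm (∑ a, ∑ b, (M i a : ℂ) * M i b * (z a * starRingEnd ℂ (z b)))]
  simp only [Finset.sum_mul, Finset.mul_sum]
  refine Finset.sum_congr rfl fun a _ => ?_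
  refine Finset.sum_congr rfl fun b _ => ?_
  refine Finset.sum_congr rfl fun c _ => ?_
  refine Finset.sum_congr rfl fun d _ => ?_
  push_cast
  ring

lemma quad_integrable (M : Matrix (Fin 4) (Fin 4) ℝ) (i j : Fin 4) :
    Integrable (fun z : Fin 4 → ℂ =>
      ‖∑ a, (M i a : ℂ) * z a‖ ^ 2 * ‖∑ a, (M j a : ℂ) * z a‖ ^ 2 * gauss z) := by
  have h : Integrable (fun z : Fin 4 → ℂ =>
      ((‖∑ a, (M i a : ℂ) * z a‖ ^ 2 * ‖∑ a, (M j a : ℂ) * z a‖ ^ 2 * gauss z : ℝ) : ℂ)) := by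
    simp_rw [quad_eq]
    refine integrable_finsetSum _ fun a _ => ?_
    refine integrable_finsetSum _ fun b _ => ?_
    refine integrable_finsetSum _ fun c _ => ?_
    refine integrable_finsetSum _ fun d _ => ?_
    exact (mono_integrable a b c d).const_mul _
  exact (by simpa only [RCLike.re_eq_complex_re, Complex.ofReal_re] using h.re)

lemma quad_integral (M : Matrix (Fin 4) (Fin 4) ℝ) (i j : Fin 4) :
    ∫ z : Fin 4 → ℂ, ‖∑ a, (M i a : ℂ) * z a‖ ^ 2 * ‖∑ a, (M j a : ℂ) * z a‖ ^ 2 * gauss z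
      = π ^ 4 * ((M * Mᵀ) i i * (M * Mᵀ) j j + (M * Mᵀ) i j ^ 2) := by
  have hI := mono_integrable
  apply Complex.ofReal_injective
  rw [← integral_complex_ofReal]
  simp_rw [quad_eq]
  rw [integral_finsetSum _ (fun a _ => integrable_finsetSum _ fun b _ =>
    integrable_finsetSum _ fun c _ => integrable_finsetSum _ fun d _ => (hI a b c d).const_mul _)]
  have : ∀ a : Fin 4, ∫ z : Fin 4 → ℂ, ∑ b, ∑ c, ∑ d, ((M i a * M i b * M j c * M j d : ℝ) : ℂ) *
        (z a * starRingEnd ℂ (z b) * (z c * starRingEnd ℂ (z d)) * (gauss z : ℂ))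
      = ∑ b, ∑ c, ∑ d, ((M i a * M i b * M j c * M j d : ℝ) : ℂ) *
        (π ^ 4 * ((if a = b then 1 else 0) * (if c = d then 1 else 0)
        + (if a = d then 1 else 0) * (if b = c then 1 else 0))) := by
    intro a
    rw [integral_finsetSum _ (fun b _ =>
      integrable_finsetSum _ fun c _ => integrable_finsetSum _ fun d _ => (hI a b c d).const_mul _)]
    refine Finset.sum_congr rfl fun b _ => ?_
    rw [integral_finsetSum _ (fun c _ => integrable_finsetSum _ fun d _ =>
      (hI a b c d).const_mul _)]
    refine Finset.sum_congr rfl fun c _ => ?_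
    rw [integral_finsetSum _ (fun d _ => (hI a b c d).const_mul _)]
    refine Finset.sum_congr rfl fun d _ => ?_
    rw [integral_const_mul, mono_integral]
  simp_rw [this]
  simp only [Matrix.mul_apply, Matrix.transpose_apply, Fin.sum_univ_four]
  simp
  ring

/-- Change of variables by a real matrix acting on `ℂ⁴`. -/
lemma change_var (M : Matrix (Fin 4) (Fin 4) ℝ) (hM : M.det ≠ 0) (F : (Fin 4 → ℂ) → ℝ) :
    ∫ v : Fin 4 → ℂ, F v
      = M.det ^ 2 * ∫ z : Fin 4 → ℂ, F (fun i => ∑ a, (M i a : ℂ) * z a) := by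
  set f : (Fin 4 → ℂ) →ₗ[ℂ] (Fin 4 → ℂ) := Matrix.toLin' (M.map (fun x : ℝ => (x : ℂ))) with hf
  have hdet : LinearMap.det (f.restrictScalars ℝ) = M.det ^ 2 := by
    rw [LinearMap.det_restrictScalars, hf, LinearMap.det_toLin']
    have : (M.map (fun x : ℝ => (x : ℂ))).det = (M.det : ℂ) :=
      (RingHom.map_det Complex.ofRealHom M).symm
    rw [this, Algebra.norm_complex_eq]
    simp [Complex.normSq_ofReal, pow_two]
  have hne : LinearMap.det (f.restrictScalars ℝ) ≠ 0 := by rw [hdet]; positivity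
  have hmap := Measure.map_linearMap_addHaar_eq_smul_addHaar (volume : Measure (Fin 4 → ℂ)) hne
  set e := (LinearMap.equivOfDetNeZero (f.restrictScalars ℝ) hne).toContinuousLinearEquiv with he
  have hfe : ∀ z, e z = fun i => ∑ a, (M i a : ℂ) * z a := by
    intro z
    rfl
  have h1 : ∫ z : Fin 4 → ℂ, F (e z)
      = ∫ v, F v ∂(Measure.map (e : (Fin 4 → ℂ) → (Fin 4 → ℂ)) volume) :=
    (e.toHomeomorph.measurableEmbedding.integral_map F).symm
  have h2 : Measure.map (e : (Fin 4 → ℂ) → (Fin 4 → ℂ)) volume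
      = ENNReal.ofReal |(M.det ^ 2)⁻¹| • volume := by
    rw [← hdet]; exact hmap
  simp_rw [← hfe]
  rw [h1, h2, integral_smul_measure]
  rw [ENNReal.toReal_ofReal (abs_nonneg _), abs_of_nonneg (by positivity), smul_eq_mul]
  field_simp

lemma form_eq (M : Matrix (Fin 4) (Fin 4) ℝ) (hM : M.det ≠ 0) (z : Fin 4 → ℂ) :
    (∑ j : Fin 4, ∑ k : Fin 4, (M * Mᵀ)⁻¹ j k *
      ((∑ a, (M k a : ℂ) * z a) * (starRingEnd ℂ) (∑ a, (M j a : ℂ) * z a)).re)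
      = ∑ k, ‖z k‖ ^ 2 := by
  have hu : IsUnit M.det := isUnit_iff_ne_zero.2 hM
  have hA : Mᵀ * (M * Mᵀ)⁻¹ * M = 1 := by
    rw [Matrix.mul_inv_rev, ← Matrix.mul_assoc, Matrix.mul_nonsing_inv _ (by rwa [Matrix.det_transpose]),
      Matrix.one_mul, Matrix.nonsing_inv_mul _ hu]
  have h1 : ∀ a b, ∑ j, ∑ k, M j a * (M * Mᵀ)⁻¹ j k * M k b = if a = b then 1 else 0 := by
    intro a b
    rw [← Matrix.one_apply, ← hA]
    generalize (M * Mᵀ)⁻¹ = B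
    rw [Matrix.mul_apply, Finset.sum_comm]
    refine Finset.sum_congr rfl fun k _ => ?_
    rw [Matrix.mul_apply, Finset.sum_mul]
    rfl
  have h2 : ∀ j k, (M * Mᵀ)⁻¹ j k *
      ((∑ a, (M k a : ℂ) * z a) * (starRingEnd ℂ) (∑ a, (M j a : ℂ) * z a)).re
      = ∑ a, ∑ b, (M j a * (M * Mᵀ)⁻¹ j k * M k b) * (z b * starRingEnd ℂ (z a)).re := by
    intro j k
    rw [map_sum, Finset.sum_mul_sum, Finset.sum_comm, Complex.re_sum, Finset.mul_sum]
    refine Finset.sum_congr rfl fun a _ => ?_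
    rw [Complex.re_sum, Finset.mul_sum]
    refine Finset.sum_congr rfl fun b _ => ?_
    have : (M k b : ℂ) * z b * (starRingEnd ℂ) ((M j a : ℂ) * z a)
       = ((M k b * M j a : ℝ) : ℂ) * (z b * starRingEnd ℂ (z a)) := by
      rw [map_mul, Complex.conj_ofReal]; push_cast; ring
    rw [this, Complex.re_ofReal_mul]; ring
  simp_rw [h2]
  have h3 : ∑ j, ∑ k, ∑ a, ∑ b, (M j a * (M * Mᵀ)⁻¹ j k * M k b) * (z b * starRingEnd ℂ (z a)).re
      = ∑ a, ∑ b, (∑ j, ∑ k, M j a * (M * Mᵀ)⁻¹ j k * M k b) * (z b * starRingEnd ℂ (z a)).re := by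
    simp only [Finset.sum_mul]
    calc _ = ∑ j, ∑ a, ∑ k, ∑ b, (M j a * (M * Mᵀ)⁻¹ j k * M k b) * (z b * starRingEnd ℂ (z a)).re :=
          Finset.sum_congr rfl fun j _ => Finset.sum_comm
      _ = ∑ j, ∑ a, ∑ b, ∑ k, (M j a * (M * Mᵀ)⁻¹ j k * M k b) * (z b * starRingEnd ℂ (z a)).re :=
          Finset.sum_congr rfl fun j _ => Finset.sum_congr rfl fun a _ => Finset.sum_comm
      _ = ∑ a, ∑ j, ∑ b, ∑ k, (M j a * (M * Mᵀ)⁻¹ j k * M k b) * (z b * starRingEnd ℂ (z a)).re :=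
          Finset.sum_comm
      _ = _ := Finset.sum_congr rfl fun a _ => Finset.sum_comm
  rw [h3]
  simp_rw [h1]
  simp only [ite_mul, one_mul, zero_mul, Finset.sum_ite_eq, Finset.mem_univ, if_true]
  refine Finset.sum_congr rfl fun a _ => ?_
  rw [Complex.mul_conj, Complex.ofReal_re, Complex.normSq_eq_norm_sq]

lemma comb_integrable (M : Matrix (Fin 4) (Fin 4) ℝ) (c : Fin 4 → Fin 4 → ℝ) :
    Integrable (fun z : Fin 4 → ℂ => ∑ i, ∑ j, c i j *
      (‖∑ a, (M i a : ℂ) * z a‖ ^ 2 * ‖∑ a, (M j a : ℂ) * z a‖ ^ 2 * gauss z)) :=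
  integrable_finsetSum _ fun i _ => integrable_finsetSum _ fun j _ =>
    (quad_integrable M i j).const_mul _

lemma comb_integral (M : Matrix (Fin 4) (Fin 4) ℝ) (c : Fin 4 → Fin 4 → ℝ) :
    ∫ z : Fin 4 → ℂ, ∑ i, ∑ j, c i j *
      (‖∑ a, (M i a : ℂ) * z a‖ ^ 2 * ‖∑ a, (M j a : ℂ) * z a‖ ^ 2 * gauss z)
    = π ^ 4 * ∑ i, ∑ j, c i j * ((M * Mᵀ) i i * (M * Mᵀ) j j + (M * Mᵀ) i j ^ 2) := by
  rw [integral_finsetSum _ fun i _ => integrable_finsetSum _ fun j _ =>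
    (quad_integrable M i j).const_mul _, Finset.mul_sum]
  refine Finset.sum_congr rfl fun i _ => ?_
  rw [integral_finsetSum _ fun j _ => (quad_integrable M i j).const_mul _, Finset.mul_sum]
  refine Finset.sum_congr rfl fun j _ => ?_
  rw [integral_const_mul, quad_integral]
  ring

/-- `E[XY]` in terms of the covariance matrix. -/
noncomputable def PP (S : Matrix (Fin 4) (Fin 4) ℝ) : ℝ :=
  (S 0 0 - S 1 1) * (S 2 2 - S 3 3) + S 0 2 ^ 2 - S 0 3 ^ 2 - S 1 2 ^ 2 + S 1 3 ^ 2

/-- `E[(X+Y)²]` in terms of the covariance matrix. -/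
noncomputable def RR (S : Matrix (Fin 4) (Fin 4) ℝ) : ℝ :=
  (S 0 0 - S 1 1) ^ 2 + S 0 0 ^ 2 + S 1 1 ^ 2 - 2 * S 0 1 ^ 2
    + ((S 2 2 - S 3 3) ^ 2 + S 2 2 ^ 2 + S 3 3 ^ 2 - 2 * S 2 3 ^ 2) + 2 * PP S

lemma key_abs (x y : ℝ) : |(|x| * |y| + x * y)| ≤ (x + y) ^ 2 / 2 := by
  rw [← abs_mul]
  rcases le_total 0 (x * y) with h | h
  · rw [abs_of_nonneg h, abs_of_nonneg (by linarith)]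
    nlinarith [sq_nonneg (x - y)]
  · rw [abs_of_nonpos h]
    simp
    positivity

lemma gauss_bound (M : Matrix (Fin 4) (Fin 4) ℝ) (hM : M.det ≠ 0) :
    |(∫ v : Fin 4 → ℂ, |‖v 0‖^2 - ‖v 1‖^2| * |‖v 2‖^2 - ‖v 3‖^2| *
        Real.exp (-(∑ j : Fin 4, ∑ k : Fin 4,
          (M * Mᵀ)⁻¹ j k * (v k * (starRingEnd ℂ) (v j)).re))) / (π ^ 4 * (M * Mᵀ).det)
      + PP (M * Mᵀ)| ≤ RR (M * Mᵀ) / 2 := by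
  rw [change_var M hM]
  simp_rw [form_eq M hM]
  have hsym : ∀ i j, (M * Mᵀ) i j = (M * Mᵀ) j i := by
    intro i j
    simp only [Matrix.mul_apply, Matrix.transpose_apply, mul_comm]
  set c1 : Fin 4 → Fin 4 → ℝ := !![0,0,1,-1;0,0,-1,1;0,0,0,0;0,0,0,0] with hc1
  set c2 : Fin 4 → Fin 4 → ℝ := !![1,-1,1,-1;-1,1,-1,1;1,-1,1,-1;-1,1,-1,1] with hc2
  set n : Fin 4 → (Fin 4 → ℂ) → ℝ := fun i z => ‖∑ a, (M i a : ℂ) * z a‖ ^ 2 with hn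
  have i1 := comb_integrable M c1
  have i2 := comb_integrable M c2
  have e1 := comb_integral M c1
  have e2 := comb_integral M c2
  have f1 : ∀ z : Fin 4 → ℂ, (∑ i, ∑ j, c1 i j *
      (‖∑ a, (M i a : ℂ) * z a‖ ^ 2 * ‖∑ a, (M j a : ℂ) * z a‖ ^ 2 * gauss z))
      = (n 0 z - n 1 z) * (n 2 z - n 3 z) * gauss z := by
    intro z
    change (∑ i, ∑ j, c1 i j * (n i z * n j z * gauss z)) = _
    simp only [Fin.sum_univ_four, hc1]
    simp
    ring
  have f2 : ∀ z : Fin 4 → ℂ, (∑ i, ∑ j, c2 i j *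
      (‖∑ a, (M i a : ℂ) * z a‖ ^ 2 * ‖∑ a, (M j a : ℂ) * z a‖ ^ 2 * gauss z))
      = ((n 0 z - n 1 z) + (n 2 z - n 3 z)) ^ 2 * gauss z := by
    intro z
    change (∑ i, ∑ j, c2 i j * (n i z * n j z * gauss z)) = _
    simp only [Fin.sum_univ_four, hc2]
    simp
    ring
  have g1 : ∑ i, ∑ j, c1 i j * ((M * Mᵀ) i i * (M * Mᵀ) j j + (M * Mᵀ) i j ^ 2)
      = PP (M * Mᵀ) := by
    generalize M * Mᵀ = S
    simp only [Fin.sum_univ_four, hc1, PP]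
    simp
    ring
  have g2 : ∑ i, ∑ j, c2 i j * ((M * Mᵀ) i i * (M * Mᵀ) j j + (M * Mᵀ) i j ^ 2)
      = RR (M * Mᵀ) := by
    generalize M * Mᵀ = S at hsym
    simp only [Fin.sum_univ_four, hc2, PP, RR, hsym 1 0, hsym 2 0, hsym 3 0, hsym 2 1, hsym 3 1,
      hsym 3 2]
    simp
    ring
  simp_rw [f1] at i1 e1
  simp_rw [f2] at i2 e2
  rw [g1] at e1
  rw [g2] at e2
  change |M.det ^ 2 * (∫ z, |n 0 z - n 1 z| * |n 2 z - n 3 z| * gauss z) / _ + _| ≤ _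
  have hdet : (M * Mᵀ).det = M.det ^ 2 := by
    rw [Matrix.det_mul, Matrix.det_transpose]; ring
  have gpos : ∀ z, 0 < gauss z := fun z => Real.exp_pos _
  have i0 : Integrable (fun z => |n 0 z - n 1 z| * |n 2 z - n 3 z| * gauss z) := by
    refine i1.abs.congr (Filter.Eventually.of_forall fun z => ?_)
    simp only [abs_mul, abs_of_pos (gpos z)]
  have key : |(∫ z, |n 0 z - n 1 z| * |n 2 z - n 3 z| * gauss z) + π ^ 4 * PP (M * Mᵀ)|
      ≤ π ^ 4 * RR (M * Mᵀ) / 2 := by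
    rw [← e1, ← e2, ← integral_add i0 i1, ← integral_div, ← Real.norm_eq_abs]
    refine norm_integral_le_of_norm_le (i2.div_const 2) (Filter.Eventually.of_forall fun z => ?_)
    rw [← add_mul, Real.norm_eq_abs, abs_mul, abs_of_pos (gpos z), mul_div_right_comm]
    exact mul_le_mul_of_nonneg_right (key_abs _ _) (gpos z).le
  rw [hdet]
  generalize (∫ z, |n 0 z - n 1 z| * |n 2 z - n 3 z| * gauss z) = I at key
  have hpi : 0 < π ^ 4 := by positivity
  have : M.det ^ 2 * I / (π ^ 4 * M.det ^ 2) + PP (M * Mᵀ) = (I + π ^ 4 * PP (M * Mᵀ)) / π ^ 4 := by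
    field_simp
  rw [this, abs_div, abs_of_pos hpi, div_le_iff₀ hpi]
  linarith

lemma chol (a b c d e f g h i j : ℝ) (h1 : 0 < a) (h2 : 0 < a * e - b ^ 2)
    (h3 : 0 < a * (e * h - f ^ 2) - b * (b * h - c * f) + c * (b * f - c * e))
    (h4 : 0 < (!![a, b, c, d; b, e, f, g; c, f, h, i; d, g, i, j]).det) :
    ∃ M : Matrix (Fin 4) (Fin 4) ℝ, M.det ≠ 0 ∧
      !![a, b, c, d; b, e, f, g; c, f, h, i; d, g, i, j] = M * Mᵀ := by
  obtain ⟨r, hr, rfl⟩ : ∃ r, 0 < r ∧ a = r ^ 2 := ⟨√a, by positivity, (Real.sq_sqrt h1.le).symm⟩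
  obtain ⟨b, rfl⟩ : ∃ b', b = r * b' := ⟨b / r, by field_simp⟩
  obtain ⟨c, rfl⟩ : ∃ b', c = r * b' := ⟨c / r, by field_simp⟩
  obtain ⟨d, rfl⟩ : ∃ b', d = r * b' := ⟨d / r, by field_simp⟩
  have h2' : 0 < e - b ^ 2 := by
    have : r ^ 2 * e - (r * b) ^ 2 = r ^ 2 * (e - b ^ 2) := by ring
    rw [this] at h2
    exact pos_of_mul_pos_right h2 (by positivity)
  obtain ⟨s, hs, hse⟩ : ∃ r, 0 < r ∧ e - b ^ 2 = r ^ 2 :=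
    ⟨√(e - b ^ 2), by positivity, (Real.sq_sqrt h2'.le).symm⟩
  obtain rfl : e = b ^ 2 + s ^ 2 := by linarith
  obtain ⟨f, rfl⟩ : ∃ f', f = b * c + s * f' := ⟨(f - b * c) / s, by field_simp; ring⟩
  obtain ⟨g, rfl⟩ : ∃ f', g = b * d + s * f' := ⟨(g - b * d) / s, by field_simp; ring⟩
  have h3' : 0 < h - c ^ 2 - f ^ 2 := by
    refine pos_of_mul_pos_right (a := r ^ 2 * s ^ 2) (lt_of_lt_of_eq h3 ?_) (by positivity)
    ring
  obtain ⟨u, hu, hue⟩ : ∃ r, 0 < r ∧ h - c ^ 2 - f ^ 2 = r ^ 2 :=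
    ⟨√(h - c ^ 2 - f ^ 2), by positivity, (Real.sq_sqrt h3'.le).symm⟩
  obtain rfl : h = c ^ 2 + f ^ 2 + u ^ 2 := by linarith
  obtain ⟨i, rfl⟩ : ∃ f', i = c * d + f * g + u * f' :=
    ⟨(i - c * d - f * g) / u, by field_simp; ring⟩
  have h4' : 0 < j - d ^ 2 - g ^ 2 - i ^ 2 := by
    refine pos_of_mul_pos_right (a := r ^ 2 * s ^ 2 * u ^ 2) (lt_of_lt_of_eq h4 ?_) (by positivity)
    simp [Matrix.det_succ_row_zero, Fin.sum_univ_succ, Fin.succAbove]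
    ring
  obtain ⟨w, hw, hwe⟩ : ∃ r, 0 < r ∧ j - d ^ 2 - g ^ 2 - i ^ 2 = r ^ 2 :=
    ⟨√(j - d ^ 2 - g ^ 2 - i ^ 2), by positivity, (Real.sq_sqrt h4'.le).symm⟩
  obtain rfl : j = d ^ 2 + g ^ 2 + i ^ 2 + w ^ 2 := by linarith
  refine ⟨!![r, 0, 0, 0; b, s, 0, 0; c, f, u, 0; d, g, i, w], ?_, ?_⟩
  · have : (!![r, 0, 0, 0; b, s, 0, 0; c, f, u, 0; d, g, i, w]).det = r * s * u * w := by
      simp [Matrix.det_succ_row_zero, Fin.sum_univ_succ, Fin.succAbove]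
      ring
    rw [this]; positivity
  · ext p q
    fin_cases p <;> fin_cases q <;> simp [Matrix.mul_apply, Fin.sum_univ_four] <;> ring

lemma taylor_exp (c : ℝ) : ∃ h : ℝ → ℝ, ContinuousAt h 0 ∧ ∀ t, Real.exp (c * t)
    = 1 + c * t + (c * t) ^ 2 / 2 + (c * t) ^ 3 / 6 + (c * t) ^ 4 / 24 + (c * t) ^ 5 / 120
      + (c * t) ^ 6 / 720 + (c * t) ^ 7 / 5040 + (c * t) ^ 8 / 40320 + (c * t) ^ 9 / 362880
      + t ^ 10 * h t := by
  have ha : AnalyticAt ℝ (fun t : ℝ => Real.exp (c * t)) 0 := by fun_prop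
  obtain ⟨F, hF, h⟩ := ha.exists_eq_sum_add_pow_mul 10
  refine ⟨F, hF.continuousAt, fun t => ?_⟩
  rw [h t]
  simp only [iteratedDeriv_exp_const_mul, Finset.sum_range_succ, Finset.sum_range_zero]
  simp [Nat.factorial]
  ring

lemma ev_pos (k : ℕ) (q : ℝ → ℝ) (hq : ContinuousAt q 0) (h0 : 0 < q 0) (f : ℝ → ℝ)
    (hf : ∀ t, f t = t ^ k * q t) : ∀ᶠ t in nhdsWithin (0:ℝ) (Set.Ioi 0), 0 < f t := by
  have h1 : ∀ᶠ t in nhdsWithin (0:ℝ) (Set.Ioi 0), 0 < q t :=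
    (hq.eventually (lt_mem_nhds h0)).filter_mono nhdsWithin_le_nhds
  filter_upwards [h1, self_mem_nhdsWithin] with t ht h0t
  rw [hf]
  have : 0 < t := h0t
  positivity

lemma ev_bdd (k : ℕ) (q : ℝ → ℝ) (hq : ContinuousAt q 0) (f : ℝ → ℝ)
    (hf : ∀ t, f t = t ^ k * q t) :
    ∃ K, 0 < K ∧ ∀ᶠ t in nhdsWithin (0:ℝ) (Set.Ioi 0), |f t| ≤ K * t ^ k := by
  refine ⟨|q 0| + 1, by positivity, ?_⟩
  have h1 : ∀ᶠ t in nhdsWithin (0:ℝ) (Set.Ioi 0), |q t| < |q 0| + 1 :=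
    (hq.abs.eventually (gt_mem_nhds (lt_add_one _))).filter_mono nhdsWithin_le_nhds
  filter_upwards [h1, self_mem_nhdsWithin] with t ht h0t
  have : 0 < t := h0t
  rw [hf, abs_mul, abs_of_pos (pow_pos this k), mul_comm]
  gcongr

/-- Reduced principal minor. -/
noncomputable def m2 (t : ℝ) : ℝ :=
  2 + 2 * t ^ 1 - 2 * t ^ 2 + 1 * t ^ 3 - 2 * Real.exp t ^ 1

/-- Reduced principal minor. -/
noncomputable def m3 (t : ℝ) : ℝ :=
  4 - 4 * t ^ 1 + 2 * t ^ 2 + 1 * t ^ 4 - 8 * Real.exp t ^ 1 + 4 * t ^ 1 * Real.exp t ^ 1 - 10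
  * t ^ 2 * Real.exp t ^ 1 + 4 * t ^ 3 * Real.exp t ^ 1 - 1 * t ^ 4 * Real.exp t ^ 1 + 4 *
  Real.exp t ^ 2

/-- Reduced principal minor. -/
noncomputable def m4 (t : ℝ) : ℝ :=
  4 - 12 * Real.exp t ^ 1 - 12 * t ^ 2 * Real.exp t ^ 1 - 4 * t ^ 3 * Real.exp t ^ 1 - 1 * t ^
  4 * Real.exp t ^ 1 + 12 * Real.exp t ^ 2 + 12 * t ^ 2 * Real.exp t ^ 2 - 4 * t ^ 3 * Real.exp
  t ^ 2 + 1 * t ^ 4 * Real.exp t ^ 2 - 4 * Real.exp t ^ 3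

lemma exp_expand : ∃ h1 h2 h3 h4 : ℝ → ℝ, ContinuousAt h1 0 ∧ ContinuousAt h2 0 ∧
    ContinuousAt h3 0 ∧ ContinuousAt h4 0 ∧
    (∀ t, Real.exp t = 1 + 1 * t ^ 1 + 1/2 * t ^ 2 + 1/6 * t ^ 3 + 1/24 * t ^ 4 + 1/120 * t ^ 5 + 1/720 * t ^ 6
      + 1/5040 * t ^ 7 + 1/40320 * t ^ 8 + 1/362880 * t ^ 9 + t ^ 10 * h1 t) ∧
    (∀ t, Real.exp t ^ 2 = 1 + 2 * t ^ 1 + 2 * t ^ 2 + 4/3 * t ^ 3 + 2/3 * t ^ 4 + 4/15 * t ^ 5 + 4/45 * t ^ 6 +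
      8/315 * t ^ 7 + 2/315 * t ^ 8 + 4/2835 * t ^ 9 + t ^ 10 * h2 t) ∧
    (∀ t, Real.exp t ^ 3 = 1 + 3 * t ^ 1 + 9/2 * t ^ 2 + 9/2 * t ^ 3 + 27/8 * t ^ 4 + 81/40 * t ^ 5 + 81/80 * t ^ 6
      + 243/560 * t ^ 7 + 729/4480 * t ^ 8 + 243/4480 * t ^ 9 + t ^ 10 * h3 t) ∧
    (∀ t, Real.exp t ^ 4 = 1 + 4 * t ^ 1 + 8 * t ^ 2 + 32/3 * t ^ 3 + 32/3 * t ^ 4 + 128/15 * t ^ 5 + 256/45 * t ^ 6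
      + 1024/315 * t ^ 7 + 512/315 * t ^ 8 + 2048/2835 * t ^ 9 + t ^ 10 * h4 t) := by
  obtain ⟨h1, c1, H1⟩ := taylor_exp 1
  obtain ⟨h2, c2, H2⟩ := taylor_exp 2
  obtain ⟨h3, c3, H3⟩ := taylor_exp 3
  obtain ⟨h4, c4, H4⟩ := taylor_exp 4
  refine ⟨h1, h2, h3, h4, c1, c2, c3, c4, fun t => ?_, fun t => ?_, fun t => ?_, fun t => ?_⟩
  · have := H1 t
    rw [one_mul] at this
    rw [this]; ring
  · have := H2 t
    rw [← Real.exp_nat_mul]; push_cast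
    rw [this]; ring
  · have := H3 t
    rw [← Real.exp_nat_mul]; push_cast
    rw [this]; ring
  · have := H4 t
    rw [← Real.exp_nat_mul]; push_cast
    rw [this]; ring

lemma ev_a : ∀ᶠ t in nhdsWithin (0:ℝ) (Set.Ioi 0), 0 < aa t - t := by
  obtain ⟨h1, h2, h3, h4, c1, c2, c3, c4, H1, H2, H3, H4⟩ := exp_expand
  refine ev_pos 1 (fun t => 2 - 1/2 * t ^ 1 + 1/6 * t ^ 2 + 1/24 * t ^ 3 + 1/120 * t ^ 4 + 1/720 * t ^ 5 + 1/5040 * t ^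
    6 + 1/40320 * t ^ 7 + 1/362880 * t ^ 8 + t ^ 9 * ((1) * h1 t)) (by fun_prop) (by norm_num)
    (fun t => aa t - t) (fun t => ?_)
  simp only [aa]
  linear_combination (1) * H1 t

lemma ev_1 : ∀ᶠ t in nhdsWithin (0:ℝ) (Set.Ioi 0), 0 < -NN t 0 0 := by
  obtain ⟨h1, h2, h3, h4, c1, c2, c3, c4, H1, H2, H3, H4⟩ := exp_expand
  refine ev_pos 1 (fun t => 2 + 3 * t ^ 1 - 2/3 * t ^ 2 + 1/12 * t ^ 3 + 1/60 * t ^ 4 + 1/360 * t ^ 5 + 1/2520 * t ^ 6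
    + 1/20160 * t ^ 7 + 1/181440 * t ^ 8 + t ^ 9 * ((2) * h1 t)) (by fun_prop) (by norm_num)
    (fun t => -NN t 0 0) (fun t => ?_)
  simp [NN]
  linear_combination (2) * H1 t

lemma ev_2 : ∀ᶠ t in nhdsWithin (0:ℝ) (Set.Ioi 0), 0 < -m2 t := by
  obtain ⟨h1, h2, h3, h4, c1, c2, c3, c4, H1, H2, H3, H4⟩ := exp_expand
  refine ev_pos 2 (fun t => 3 - 2/3 * t ^ 1 + 1/12 * t ^ 2 + 1/60 * t ^ 3 + 1/360 * t ^ 4 + 1/2520 * t ^ 5 + 1/20160 *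
    t ^ 6 + 1/181440 * t ^ 7 + t ^ 8 * ((2) * h1 t)) (by fun_prop) (by norm_num)
    (fun t => -m2 t) (fun t => ?_)
  simp only [m2]
  linear_combination (2) * H1 t

lemma ev_3 : ∀ᶠ t in nhdsWithin (0:ℝ) (Set.Ioi 0), 0 < m3 t := by
  obtain ⟨h1, h2, h3, h4, c1, c2, c3, c4, H1, H2, H3, H4⟩ := exp_expand
  refine ev_pos 4 (fun t => 2 + 1/2 * t ^ 1 + 23/180 * t ^ 2 + 1/45 * t ^ 3 + 19/5040 * t ^ 4 + 29/30240 * t ^ 5 -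
    151/181440 * t ^ 6 - 23/181440 * t ^ 7 - 1/72576 * t ^ 8 - 1/362880 * t ^ 9 + t ^ 6 * ((-8
    + 4 * t ^ 1 - 10 * t ^ 2 + 4 * t ^ 3 - 1 * t ^ 4) * h1 t + (4) * h2 t)) (by fun_prop) (by norm_num)
    (fun t => m3 t) (fun t => ?_)
  simp only [m3]
  linear_combination (-8 + 4 * t ^ 1 - 10 * t ^ 2 + 4 * t ^ 3 - 1 * t ^ 4) * H1 t + (4) * H2 t

lemma ev_4 : ∀ᶠ t in nhdsWithin (0:ℝ) (Set.Ioi 0), 0 < -m4 t := by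
  obtain ⟨h1, h2, h3, h4, c1, c2, c3, c4, H1, H2, H3, H4⟩ := exp_expand
  refine ev_pos 9 (fun t => 1/2160 - 41/672 * t ^ 1 - 251/15120 * t ^ 2 - 3/4480 * t ^ 3 - 73/51840 * t ^ 4 + t ^ 1 *
    ((12 + 12 * t ^ 2 + 4 * t ^ 3 + 1 * t ^ 4) * h1 t + (-12 - 12 * t ^ 2 + 4 * t ^ 3 - 1 * t ^
    4) * h2 t + (4) * h3 t)) (by fun_prop) (by norm_num)
    (fun t => -m4 t) (fun t => ?_)
  simp only [m4]
  linear_combination (12 + 12 * t ^ 2 + 4 * t ^ 3 + 1 * t ^ 4) * H1 t + (-12 - 12 * t ^ 2 + 4 * t ^ 3 - 1 * t ^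
    4) * H2 t + (4) * H3 t

lemma ev_P : ∃ K, 0 < K ∧ ∀ᶠ t in nhdsWithin (0:ℝ) (Set.Ioi 0),
    |3 * PP (NN t) + 2 * aa t ^ 3| ≤ K * t ^ 4 := by
  obtain ⟨h1, h2, h3, h4, c1, c2, c3, c4, H1, H2, H3, H4⟩ := exp_expand
  refine ev_bdd 4 (fun t => 159/2 + 75/4 * t ^ 1 + 147/40 * t ^ 2 - 9/10 * t ^ 3 - 779/1680 * t ^ 4 - 6943/60480 * t ^
    5 - 815/8064 * t ^ 6 - 1417/120960 * t ^ 7 - 2581/120960 * t ^ 8 + 547/120960 * t ^ 9 +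
    1/24192 * t ^ 10 + 1/120960 * t ^ 11 + t ^ 6 * ((-21 + 84 * t ^ 1 - 135 * t ^ 2 + 84 * t ^
    3 - 3 * t ^ 4 - 12 * t ^ 5 + 3 * t ^ 6) * h1 t + (3 - 42 * t ^ 1 + 66 * t ^ 2 - 30 * t ^ 3
    + 3 * t ^ 4) * h2 t + (5) * h3 t)) (by fun_prop)
    (fun t => 3 * PP (NN t) + 2 * aa t ^ 3) (fun t => ?_)
  simp [aa, NN, PP, RR]
  linear_combination (-21 + 84 * t ^ 1 - 135 * t ^ 2 + 84 * t ^ 3 - 3 * t ^ 4 - 12 * t ^ 5 + 3 * t ^ 6) * H1 t +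
    (3 - 42 * t ^ 1 + 66 * t ^ 2 - 30 * t ^ 3 + 3 * t ^ 4) * H2 t + (5) * H3 t

lemma ev_R : ∃ K, 0 < K ∧ ∀ᶠ t in nhdsWithin (0:ℝ) (Set.Ioi 0),
    |RR (NN t)| ≤ K * t ^ 4 := by
  obtain ⟨h1, h2, h3, h4, c1, c2, c3, c4, H1, H2, H3, H4⟩ := exp_expand
  refine ev_bdd 4 (fun t => 142 + 111/2 * t ^ 1 + 943/20 * t ^ 2 + 292/15 * t ^ 3 + 4161/560 * t ^ 4 + 76453/30240 * t
    ^ 5 - 5099/6720 * t ^ 6 - 19081/60480 * t ^ 7 - 57803/181440 * t ^ 8 + 365/36288 * t ^ 9 -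
    251/181440 * t ^ 10 + 19/6720 * t ^ 11 + t ^ 6 * ((-30 + 72 * t ^ 1 - 102 * t ^ 2 + 66 * t
    ^ 3 - 6 * t ^ 4 - 8 * t ^ 5 + 2 * t ^ 6) * h1 t + (18 - 36 * t ^ 1 + 30 * t ^ 2 - 14 * t ^
    3 + 16 * t ^ 4 - 10 * t ^ 5 + 2 * t ^ 6) * h2 t + (-10 + 12 * t ^ 2 - 6 * t ^ 3) * h3 t +
    (6) * h4 t)) (by fun_prop)
    (fun t => RR (NN t)) (fun t => ?_)
  simp [aa, NN, PP, RR]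
  linear_combination (-30 + 72 * t ^ 1 - 102 * t ^ 2 + 66 * t ^ 3 - 6 * t ^ 4 - 8 * t ^ 5 + 2 * t ^ 6) * H1 t +
    (18 - 36 * t ^ 1 + 30 * t ^ 2 - 14 * t ^ 3 + 16 * t ^ 4 - 10 * t ^ 5 + 2 * t ^ 6) * H2 t +
    (-10 + 12 * t ^ 2 - 6 * t ^ 3) * H3 t + (6) * H4 t

lemma aa_eq (t : ℝ) : dd t = -aa t := by unfold dd aa; ring

lemma lam_factor (t : ℝ) (ha : 0 < aa t) (h1 : 0 < -NN t 0 0) (h2 : 0 < -m2 t) (h3 : 0 < m3 t)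
    (h4 : 0 < -m4 t) : ∃ M : Matrix (Fin 4) (Fin 4) ℝ, M.det ≠ 0 ∧ Lam t = M * Mᵀ := by
  have e1 : -NN t 0 0 = -(-2*Real.exp t + 2 - 2*t^2 + t^3) := by simp [NN]
  rw [e1] at h1
  have := chol (-(-2*Real.exp t + 2 - 2*t^2 + t^3)) (-(t*(t-2)))
    (-(4*t*Real.exp t - 4*t + 3*t^2 - t^3 - t^2*Real.exp t - 2*Real.exp t + 2))
    (-(t*(t-1-Real.exp t))) (-(-Real.exp t + 1 - t + t^2)) (-(t*(t-1-Real.exp t)))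
    (-(-Real.exp t + 1 - t)) (-(Real.exp t * (-2*Real.exp t + 2 - 2*t^2 + t^3)))
    (-(t*(t-2)*Real.exp t)) (-(Real.exp t * (-Real.exp t + 1 - t + t^2))) h1
    (by
      refine lt_of_lt_of_eq (mul_pos ha h2) ?_
      unfold aa m2; ring)
    (by
      refine lt_of_lt_of_eq (mul_pos (pow_pos ha 2) h3) ?_
      unfold aa m3; ring)
    (by
      refine lt_of_lt_of_eq (mul_pos (pow_pos ha 3) h4) ?_
      simp [Matrix.det_succ_row_zero, Fin.sum_univ_succ, Fin.succAbove]
      unfold aa m4; ring)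
  obtain ⟨M, hM, hE⟩ := this
  obtain ⟨s, hs, hse⟩ : ∃ s, 0 < s ∧ s * s = 1 / aa t :=
    ⟨√(1 / aa t), by positivity, Real.mul_self_sqrt (by positivity)⟩
  refine ⟨s • M, ?_, ?_⟩
  · rw [Matrix.det_smul]
    exact mul_ne_zero (by positivity) hM
  · rw [Matrix.transpose_smul, Matrix.smul_mul, Matrix.mul_smul, smul_smul, hse, ← hE, Lam, aa_eq]
    have : NN t = -!![-(-2*Real.exp t + 2 - 2*t^2 + t^3), -(t*(t-2)), -(4*t*Real.exp t - 4*t + 3*t^2 - t^3 - t^2*Real.exp t - 2*Real.exp t + 2), -(t*(t-1-Real.exp t)); -(t*(t-2)), -(-Real.exp t + 1 - t + t^2), -(t*(t-1-Real.exp t)), -(-Real.exp t + 1 - t); -(4*t*Real.exp t - 4*t + 3*t^2 - t^3 - t^2*Real.exp t - 2*Real.exp t + 2), -(t*(t-1-Real.exp t)), -(Real.exp t * (-2*Real.exp t + 2 - 2*t^2 + t^3)), -(t*(t-2)*Real.exp t); -(t*(t-1-Real.exp t)), -(-Real.exp t + 1 - t), -(t*(t-2)*Real.exp t), -(Real.exp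 t * (-Real.exp t + 1 - t + t^2))] := by
      ext p q
      rw [Matrix.neg_apply]
      fin_cases p <;> fin_cases q <;> exact (neg_neg _).symm
    rw [this, smul_neg, one_div_neg_eq_neg_one_div, neg_smul, neg_neg]

lemma main_bound (t K1 K2 : ℝ) (ht : 0 < t) (ha : 0 < aa t - t) (h1 : 0 < -NN t 0 0)
    (h2 : 0 < -m2 t) (h3 : 0 < m3 t) (h4 : 0 < -m4 t)
    (hP : |3 * PP (NN t) + 2 * aa t ^ 3| ≤ K1 * t ^ 4) (hR : |RR (NN t)| ≤ K2 * t ^ 4) :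
    |J t - 2 / (3 * Real.pi ^ 2)| ≤ (K1 + K2) * t := by
  have ha' : 0 < aa t := by linarith
  obtain ⟨M, hM, hL⟩ := lam_factor t ha' h1 h2 h3 h4
  have hb := gauss_bound M hM
  rw [← hL] at hb
  have hdet : (Lam t).det ≠ 0 := by
    rw [hL, Matrix.det_mul, Matrix.det_transpose]; exact mul_ne_zero hM hM
  have hPP : PP (Lam t) = PP (NN t) / aa t ^ 2 := by
    simp only [PP, Lam, aa_eq, Matrix.smul_apply, smul_eq_mul]
    field_simp
    ring
  have hRR : RR (Lam t) = RR (NN t) / aa t ^ 2 := by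
    simp only [RR, hPP]
    simp only [Lam, aa_eq, Matrix.smul_apply, smul_eq_mul]
    field_simp
    ring
  rw [hPP, hRR] at hb
  unfold _root_.J
  generalize (∫ v : Fin 4 → ℂ, |‖v 0‖^2 - ‖v 1‖^2| * |‖v 2‖^2 - ‖v 3‖^2| *
        Real.exp (-(∑ j : Fin 4, ∑ k : Fin 4,
          (Lam t)⁻¹ j k * (v k * (starRingEnd ℂ) (v j)).re))) = I at hb ⊢
  generalize hV : I / (π ^ 4 * (Lam t).det) = V at hb
  generalize PP (NN t) = P at *
  generalize RR (NN t) = R at *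
  generalize aa t = a at *
  have hpi : 0 < π := Real.pi_pos
  have e1 : 1 / (π ^ 6 * a * (Lam t).det) * I - 2 / (3 * π ^ 2)
      = ((V + P / a ^ 2) / a - (3 * P + 2 * a ^ 3) / (3 * a ^ 3)) / π ^ 2 := by
    rw [← hV]
    field_simp
    ring
  have hpi2 : 1 ≤ π ^ 2 := by nlinarith [Real.pi_gt_three]
  have hR' := (le_abs_self R).trans hR
  have hta : t ^ 3 ≤ a ^ 3 := by gcongr; linarith
  have b1 : |(V + P / a ^ 2) / a| ≤ K2 * t / 2 := by
    rw [abs_div, abs_of_pos ha', div_le_iff₀ ha']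
    refine hb.trans ?_
    have hK2 : 0 ≤ K2 := by
      have : 0 ≤ K2 * t ^ 4 := (abs_nonneg R).trans hR
      exact nonneg_of_mul_nonneg_left this (by positivity)
    rw [div_le_iff₀ (by norm_num), div_le_iff₀ (by positivity)]
    calc R ≤ K2 * t * t ^ 3 := by linarith
      _ ≤ K2 * t * a ^ 3 := by gcongr
      _ = _ := by ring
  have b2 : |(3 * P + 2 * a ^ 3) / (3 * a ^ 3)| ≤ K1 * t / 3 := by
    have hK1 : 0 ≤ K1 := by
      have : 0 ≤ K1 * t ^ 4 := (abs_nonneg _).trans hP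
      exact nonneg_of_mul_nonneg_left this (by positivity)
    rw [abs_div, abs_of_pos (by positivity : 0 < 3 * a ^ 3), div_le_iff₀ (by positivity)]
    calc _ ≤ K1 * t * t ^ 3 := by linarith
      _ ≤ K1 * t * a ^ 3 := by gcongr
      _ = _ := by ring
  rw [e1, abs_div, abs_of_pos (by positivity : 0 < π ^ 2)]
  refine (div_le_self (abs_nonneg _) hpi2).trans ?_
  refine (abs_sub _ _).trans ?_
  have n1 := (abs_nonneg _).trans b1
  have n2 := (abs_nonneg _).trans b2
  linarith

theorem J_tendsto_two_div_three_pi_sq :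
    (∃ δ > (0:ℝ), ∃ C > (0:ℝ), ∀ t ∈ Set.Ioo (0:ℝ) δ,
      |J t - 2 / (3 * Real.pi ^ 2)| ≤ C * t) ∧
    Filter.Tendsto J (nhdsWithin 0 (Set.Ioi 0)) (nhds (2 / (3 * Real.pi ^ 2))) := by
  obtain ⟨K1, hK1, hP⟩ := ev_P
  obtain ⟨K2, hK2, hR⟩ := ev_R
  have hev : ∀ᶠ t in nhdsWithin (0:ℝ) (Set.Ioi 0),
      |_root_.J t - 2 / (3 * Real.pi ^ 2)| ≤ (K1 + K2) * t := by
    filter_upwards [hP, hR, ev_a, ev_1, ev_2, ev_3, ev_4, self_mem_nhdsWithin]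
      with t p r a x1 x2 x3 x4 ht
    exact main_bound t K1 K2 ht a x1 x2 x3 x4 p r
  constructor
  · obtain ⟨δ, hδ, h⟩ := mem_nhdsGT_iff_exists_Ioo_subset.1 hev
    exact ⟨δ, hδ, K1 + K2, by positivity, fun t ht => h ht⟩
  · rw [tendsto_iff_norm_sub_tendsto_zero]
    refine squeeze_zero' (Filter.Eventually.of_forall fun t => norm_nonneg _) hev ?_
    have : Filter.Tendsto (fun t : ℝ => (K1 + K2) * t) (nhds 0) (nhds ((K1 + K2) * 0)) :=
      (continuous_const.mul continuous_id).tendsto 0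
    rw [mul_zero] at this
    exact this.mono_left nhdsWithin_le_nhds
end

section
/- Let Λ(t) be the explicit real symmetric 4×4 matrix described in the context and set Y(t) := t⁵·Λ(t)⁻¹ where Λ(t) is invertible. Let Y₀ := !![0, 0, 0, 0; 0, 4320, 0, −4320; 0, 0, 0, 0; 0, −4320, 0, 4320] and Y₁ := !![0, 360, 0, −360; 360, −1080, −360, 3240; 0, −360, 0, 360; −360, 3240, 360, −5400]. Then there exist δ > 0 and C > 0 such that for all t ∈ (0, δ), Λ(t) is invertible and every entry of Y(t) − Y₀ − t·Y₁ has absolute value at most C·t². -/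
open Real Matrix

noncomputable def Y0 : Matrix (Fin 4) (Fin 4) ℝ :=
  !![0, 0, 0, 0; 0, 4320, 0, -4320; 0, 0, 0, 0; 0, -4320, 0, 4320]

noncomputable def Y1 : Matrix (Fin 4) (Fin 4) ℝ :=
  !![0, 360, 0, -360; 360, -1080, -360, 3240; 0, -360, 0, 360; -360, 3240, 360, -5400]

open Asymptotics Filter Topology

noncomputable def qq (t E : ℝ) : ℝ :=
  (4) + (-12)*E^1 + (-12)*t^2*E^1 + (-4)*t^3*E^1 + (-1)*t^4*E^1 + (12)*E^2 + (12)*t^2*E^2 + (-4)*t^3*E^2 + (1)*t^4*E^2 + (-4)*E^3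

noncomputable def MM (t E : ℝ) : Matrix (Fin 4) (Fin 4) ℝ :=
  !![(-2)*E^1 + (-4)*t^1*E^1 + (-1)*t^2*E^1 + (4)*E^2 + (4)*t^1*E^2 + (-1)*t^2*E^2 + (1)*t^3*E^2 + (-2)*E^3,
     (-2)*t^2*E^1 + (-1)*t^3*E^1 + (2)*t^2*E^2 + (-1)*t^3*E^2,
     (2) + (-4)*E^1 + (4)*t^1*E^1 + (1)*t^2*E^1 + (1)*t^3*E^1 + (2)*E^2 + (-4)*t^1*E^2 + (1)*t^2*E^2,
     (2)*t^1 + (-4)*t^1*E^1 + (-2)*t^3*E^1 + (2)*t^1*E^2;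
     (-2)*t^2*E^1 + (-1)*t^3*E^1 + (2)*t^2*E^2 + (-1)*t^3*E^2,
     (-4)*E^1 + (4)*t^1*E^1 + (-2)*t^2*E^1 + (-1)*t^4*E^1 + (8)*E^2 + (-4)*t^1*E^2 + (10)*t^2*E^2 + (-4)*t^3*E^2 + (1)*t^4*E^2 + (-4)*E^3,
     (2)*t^1 + (-4)*t^1*E^1 + (-2)*t^3*E^1 + (2)*t^1*E^2,
     (4) + (-4)*t^1 + (2)*t^2 + (-8)*E^1 + (4)*t^1*E^1 + (-10)*t^2*E^1 + (4)*t^3*E^1 + (4)*E^2;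
     (2) + (-4)*E^1 + (4)*t^1*E^1 + (1)*t^2*E^1 + (1)*t^3*E^1 + (2)*E^2 + (-4)*t^1*E^2 + (1)*t^2*E^2,
     (2)*t^1 + (-4)*t^1*E^1 + (-2)*t^3*E^1 + (2)*t^1*E^2,
     (-2) + (-4)*t^1 + (-1)*t^2 + (4)*E^1 + (4)*t^1*E^1 + (-1)*t^2*E^1 + (1)*t^3*E^1 + (-2)*E^2,
     (-2)*t^2 + (-1)*t^3 + (2)*t^2*E^1 + (-1)*t^3*E^1;
     (2)*t^1 + (-4)*t^1*E^1 + (-2)*t^3*E^1 + (2)*t^1*E^2,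
     (4) + (-4)*t^1 + (2)*t^2 + (-8)*E^1 + (4)*t^1*E^1 + (-10)*t^2*E^1 + (4)*t^3*E^1 + (4)*E^2,
     (-2)*t^2 + (-1)*t^3 + (2)*t^2*E^1 + (-1)*t^3*E^1,
     (-4) + (4)*t^1 + (-2)*t^2 + (-1)*t^4 + (8)*E^1 + (-4)*t^1*E^1 + (10)*t^2*E^1 + (-4)*t^3*E^1 + (1)*t^4*E^1 + (-4)*E^2]

/-- Remainder of order eleven of the exponential series at `k t`. -/
noncomputable def rem (k t : ℝ) : ℝ :=
  Real.exp (k*t) - ∑ i ∈ Finset.range 11, (k*t)^i / (i.factorial : ℝ)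

lemma rem_isBigO (k : ℝ) : (fun t => rem k t) =O[𝓝 0] (fun t : ℝ => t^11) := by
  have h := Real.exp_sub_sum_range_isBigO_pow 11
  have hk : Tendsto (fun t : ℝ => k*t) (𝓝 0) (𝓝 0) := by
    have : Continuous (fun t : ℝ => k*t) := by fun_prop
    simpa using this.tendsto 0
  refine (h.comp_tendsto hk).trans ?_
  have : ((fun x : ℝ => x^11) ∘ fun t : ℝ => k*t) = fun t => k^11 * t^11 := by
    funext t; simp [mul_pow]
  rw [this]
  exact (isBigO_refl _ _).const_mul_left _

lemma key (W c1 c2 c3 p : ℝ → ℝ) (h1 : Continuous c1) (h2 : Continuous c2) (h3 : Continuous c3)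
    (hp : Continuous p)
    (h : ∀ t, W t = c1 t * rem 1 t + c2 t * rem 2 t + c3 t * rem 3 t + p t * t^11) :
    W =O[𝓝 0] (fun t : ℝ => t^11) := by
  have hb : ∀ c : ℝ → ℝ, Continuous c → ∀ f : ℝ → ℝ, f =O[𝓝 0] (fun t : ℝ => t^11) →
      (fun t => c t * f t) =O[𝓝 0] (fun t : ℝ => t^11) := by
    intro c hc f hf
    have := ((hc.tendsto 0).isBigO_one ℝ).mul hf
    simpa using this
  rw [funext h]
  exact (((hb c1 h1 _ (rem_isBigO 1)).add (hb c2 h2 _ (rem_isBigO 2))).add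
    (hb c3 h3 _ (rem_isBigO 3))).add (hb p hp _ (isBigO_refl _ _))

lemma exp_two (t : ℝ) : Real.exp (2*t) = Real.exp t ^ 2 := by
  rw [← Real.exp_nat_mul]; norm_num

lemma exp_three (t : ℝ) : Real.exp (3*t) = Real.exp t ^ 3 := by
  rw [← Real.exp_nat_mul]; norm_num

lemma qq_bigO : (fun t : ℝ => qq t (Real.exp t) + t^9/2160 + t^10/1440)
    =O[𝓝 0] (fun t : ℝ => t^11) := by
  refine key _ (fun t => (-12) + (-12)*t^2 + (-4)*t^3 + (-1)*t^4)
    (fun t => (12) + (12)*t^2 + (-4)*t^3 + (1)*t^4)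
    (fun t => (-4))
    (fun t => (251/15120) + (817/201600)*t^1 + (101/362880)*t^2 + (341/1209600)*t^3)
    (by fun_prop) (by fun_prop) (by fun_prop) (by fun_prop) ?_
  intro t
  simp only [rem, exp_two, exp_three, one_mul, Finset.sum_range_succ, Finset.sum_range_zero,
    Nat.factorial]
  simp [qq, MM, Y0, Y1]
  ring

lemma W_0_0 : (fun t : ℝ => t^5 * MM t (Real.exp t) 0 0 - qq t (Real.exp t) * (Y0 0 0 + t * Y1 0 0))
    =O[𝓝 0] (fun t : ℝ => t^11) := by
  refine key _ (fun t => (-2)*t^5 + (-4)*t^6 + (-1)*t^7)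
    (fun t => (4)*t^5 + (4)*t^6 + (-1)*t^7 + (1)*t^8)
    (fun t => (-2)*t^5)
    (fun t => (-1/72) + (-1/40)*t^1 + (-11/480)*t^2 + (-431/30240)*t^3 + (-1363/201600)*t^4 + (3667/604800)*t^5 + (13/11520)*t^6 + (4/14175)*t^7)
    (by fun_prop) (by fun_prop) (by fun_prop) (by fun_prop) ?_
  intro t
  simp only [rem, exp_two, exp_three, one_mul, Finset.sum_range_succ, Finset.sum_range_zero,
    Nat.factorial]
  simp [qq, MM, Y0, Y1]
  ring

lemma W_0_1 : (fun t : ℝ => t^5 * MM t (Real.exp t) 0 1 - qq t (Real.exp t) * (Y0 0 1 + t * Y1 0 1))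
    =O[𝓝 0] (fun t : ℝ => t^11) := by
  refine key _ (fun t => (4320)*t^1 + (4320)*t^3 + (1440)*t^4 + (360)*t^5 + (-2)*t^7 + (-1)*t^8)
    (fun t => (-4320)*t^1 + (-4320)*t^3 + (1440)*t^4 + (-360)*t^5 + (2)*t^7 + (-1)*t^8)
    (fun t => (1440)*t^1)
    (fun t => (-1727/280)*t^1 + (-873/560)*t^2 + (-353/2520)*t^3 + (-769/6720)*t^4 + (-1291/362880)*t^5 + (-257/302400)*t^6 + (-41/145152)*t^7)
    (by fun_prop) (by fun_prop) (by fun_prop) (by fun_prop) ?_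
  intro t
  simp only [rem, exp_two, exp_three, one_mul, Finset.sum_range_succ, Finset.sum_range_zero,
    Nat.factorial]
  simp [qq, MM, Y0, Y1]
  ring

lemma W_0_2 : (fun t : ℝ => t^5 * MM t (Real.exp t) 0 2 - qq t (Real.exp t) * (Y0 0 2 + t * Y1 0 2))
    =O[𝓝 0] (fun t : ℝ => t^11) := by
  refine key _ (fun t => (-4)*t^5 + (4)*t^6 + (1)*t^7 + (1)*t^8)
    (fun t => (2)*t^5 + (-4)*t^6 + (1)*t^7)
    (fun t => 0)
    (fun t => (1/72) + (1/60)*t^1 + (1/96)*t^2 + (17/3780)*t^3 + (101/67200)*t^4 + (47/151200)*t^5 + (23/80640)*t^6 + (1/3628800)*t^7)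
    (by fun_prop) (by fun_prop) (by fun_prop) (by fun_prop) ?_
  intro t
  simp only [rem, exp_two, exp_three, one_mul, Finset.sum_range_succ, Finset.sum_range_zero,
    Nat.factorial]
  simp [qq, MM, Y0, Y1]
  ring

lemma W_0_3 : (fun t : ℝ => t^5 * MM t (Real.exp t) 0 3 - qq t (Real.exp t) * (Y0 0 3 + t * Y1 0 3))
    =O[𝓝 0] (fun t : ℝ => t^11) := by
  refine key _ (fun t => (-4320)*t^1 + (-4320)*t^3 + (-1440)*t^4 + (-360)*t^5 + (-4)*t^6 + (-2)*t^8)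
    (fun t => (4320)*t^1 + (4320)*t^3 + (-1440)*t^4 + (360)*t^5 + (2)*t^6)
    (fun t => (-1440)*t^1)
    (fun t => (-1/12) + (3821/630)*t^1 + (2507/1680)*t^2 + (1109/10080)*t^3 + (1571/15120)*t^4 + (233/453600)*t^5 + (-1/181440)*t^6 + (-1/1814400)*t^7)
    (by fun_prop) (by fun_prop) (by fun_prop) (by fun_prop) ?_
  intro t
  simp only [rem, exp_two, exp_three, one_mul, Finset.sum_range_succ, Finset.sum_range_zero,
    Nat.factorial]
  simp [qq, MM, Y0, Y1]
  ring

lemma W_1_0 : (fun t : ℝ => t^5 * MM t (Real.exp t) 1 0 - qq t (Real.exp t) * (Y0 1 0 + t * Y1 1 0))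
    =O[𝓝 0] (fun t : ℝ => t^11) := by
  refine key _ (fun t => (4320)*t^1 + (4320)*t^3 + (1440)*t^4 + (360)*t^5 + (-2)*t^7 + (-1)*t^8)
    (fun t => (-4320)*t^1 + (-4320)*t^3 + (1440)*t^4 + (-360)*t^5 + (2)*t^7 + (-1)*t^8)
    (fun t => (1440)*t^1)
    (fun t => (-1727/280)*t^1 + (-873/560)*t^2 + (-353/2520)*t^3 + (-769/6720)*t^4 + (-1291/362880)*t^5 + (-257/302400)*t^6 + (-41/145152)*t^7)
    (by fun_prop) (by fun_prop) (by fun_prop) (by fun_prop) ?_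
  intro t
  simp only [rem, exp_two, exp_three, one_mul, Finset.sum_range_succ, Finset.sum_range_zero,
    Nat.factorial]
  simp [qq, MM, Y0, Y1]
  ring

lemma W_1_1 : (fun t : ℝ => t^5 * MM t (Real.exp t) 1 1 - qq t (Real.exp t) * (Y0 1 1 + t * Y1 1 1))
    =O[𝓝 0] (fun t : ℝ => t^11) := by
  refine key _ (fun t => (51840) + (-12960)*t^1 + (51840)*t^2 + (4320)*t^3 + (-1084)*t^5 + (4)*t^6 + (-2)*t^7 + (-1)*t^9)
    (fun t => (-51840) + (12960)*t^1 + (-51840)*t^2 + (30240)*t^3 + (-8640)*t^4 + (1088)*t^5 + (-4)*t^6 + (10)*t^7 + (-4)*t^8 + (1)*t^9)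
    (fun t => (17280) + (-4320)*t^1 + (-4)*t^5)
    (fun t => (-23339/315) + (-131/420)*t^1 + (817/280)*t^2 + (-857/864)*t^3 + (86291/302400)*t^4 + (23/1800)*t^5 + (353/100800)*t^6 + (169/604800)*t^7 + (341/1209600)*t^8)
    (by fun_prop) (by fun_prop) (by fun_prop) (by fun_prop) ?_
  intro t
  simp only [rem, exp_two, exp_three, one_mul, Finset.sum_range_succ, Finset.sum_range_zero,
    Nat.factorial]
  simp [qq, MM, Y0, Y1]
  ring

lemma W_1_2 : (fun t : ℝ => t^5 * MM t (Real.exp t) 1 2 - qq t (Real.exp t) * (Y0 1 2 + t * Y1 1 2))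
    =O[𝓝 0] (fun t : ℝ => t^11) := by
  refine key _ (fun t => (-4320)*t^1 + (-4320)*t^3 + (-1440)*t^4 + (-360)*t^5 + (-4)*t^6 + (-2)*t^8)
    (fun t => (4320)*t^1 + (4320)*t^3 + (-1440)*t^4 + (360)*t^5 + (2)*t^6)
    (fun t => (-1440)*t^1)
    (fun t => (-1/12) + (3821/630)*t^1 + (2507/1680)*t^2 + (1109/10080)*t^3 + (1571/15120)*t^4 + (233/453600)*t^5 + (-1/181440)*t^6 + (-1/1814400)*t^7)
    (by fun_prop) (by fun_prop) (by fun_prop) (by fun_prop) ?_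
  intro t
  simp only [rem, exp_two, exp_three, one_mul, Finset.sum_range_succ, Finset.sum_range_zero,
    Nat.factorial]
  simp [qq, MM, Y0, Y1]
  ring

lemma W_1_3 : (fun t : ℝ => t^5 * MM t (Real.exp t) 1 3 - qq t (Real.exp t) * (Y0 1 3 + t * Y1 1 3))
    =O[𝓝 0] (fun t : ℝ => t^11) := by
  refine key _ (fun t => (-51840) + (38880)*t^1 + (-51840)*t^2 + (21600)*t^3 + (8640)*t^4 + (3232)*t^5 + (4)*t^6 + (-10)*t^7 + (4)*t^8)
    (fun t => (51840) + (-38880)*t^1 + (51840)*t^2 + (-56160)*t^3 + (17280)*t^4 + (-3236)*t^5)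
    (fun t => (-17280) + (12960)*t^1)
    (fun t => (46993/630) + (-45473/1260)*t^1 + (-3743/315)*t^2 + (9839/30240)*t^3 + (-275701/302400)*t^4 + (11/151200)*t^5 + (1/120960)*t^6 + (1/907200)*t^7)
    (by fun_prop) (by fun_prop) (by fun_prop) (by fun_prop) ?_
  intro t
  simp only [rem, exp_two, exp_three, one_mul, Finset.sum_range_succ, Finset.sum_range_zero,
    Nat.factorial]
  simp [qq, MM, Y0, Y1]
  ring

lemma W_2_0 : (fun t : ℝ => t^5 * MM t (Real.exp t) 2 0 - qq t (Real.exp t) * (Y0 2 0 + t * Y1 2 0))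
    =O[𝓝 0] (fun t : ℝ => t^11) := by
  refine key _ (fun t => (-4)*t^5 + (4)*t^6 + (1)*t^7 + (1)*t^8)
    (fun t => (2)*t^5 + (-4)*t^6 + (1)*t^7)
    (fun t => 0)
    (fun t => (1/72) + (1/60)*t^1 + (1/96)*t^2 + (17/3780)*t^3 + (101/67200)*t^4 + (47/151200)*t^5 + (23/80640)*t^6 + (1/3628800)*t^7)
    (by fun_prop) (by fun_prop) (by fun_prop) (by fun_prop) ?_
  intro t
  simp only [rem, exp_two, exp_three, one_mul, Finset.sum_range_succ, Finset.sum_range_zero,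
    Nat.factorial]
  simp [qq, MM, Y0, Y1]
  ring

lemma W_2_1 : (fun t : ℝ => t^5 * MM t (Real.exp t) 2 1 - qq t (Real.exp t) * (Y0 2 1 + t * Y1 2 1))
    =O[𝓝 0] (fun t : ℝ => t^11) := by
  refine key _ (fun t => (-4320)*t^1 + (-4320)*t^3 + (-1440)*t^4 + (-360)*t^5 + (-4)*t^6 + (-2)*t^8)
    (fun t => (4320)*t^1 + (4320)*t^3 + (-1440)*t^4 + (360)*t^5 + (2)*t^6)
    (fun t => (-1440)*t^1)
    (fun t => (-1/12) + (3821/630)*t^1 + (2507/1680)*t^2 + (1109/10080)*t^3 + (1571/15120)*t^4 + (233/453600)*t^5 + (-1/181440)*t^6 + (-1/1814400)*t^7)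
    (by fun_prop) (by fun_prop) (by fun_prop) (by fun_prop) ?_
  intro t
  simp only [rem, exp_two, exp_three, one_mul, Finset.sum_range_succ, Finset.sum_range_zero,
    Nat.factorial]
  simp [qq, MM, Y0, Y1]
  ring

lemma W_2_2 : (fun t : ℝ => t^5 * MM t (Real.exp t) 2 2 - qq t (Real.exp t) * (Y0 2 2 + t * Y1 2 2))
    =O[𝓝 0] (fun t : ℝ => t^11) := by
  refine key _ (fun t => (4)*t^5 + (4)*t^6 + (-1)*t^7 + (1)*t^8)
    (fun t => (-2)*t^5)
    (fun t => 0)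
    (fun t => (-1/72) + (-1/90)*t^1 + (-7/1440)*t^2 + (-23/15120)*t^3 + (-229/604800)*t^4 + (1/43200)*t^5 + (1/403200)*t^6 + (1/3628800)*t^7)
    (by fun_prop) (by fun_prop) (by fun_prop) (by fun_prop) ?_
  intro t
  simp only [rem, exp_two, exp_three, one_mul, Finset.sum_range_succ, Finset.sum_range_zero,
    Nat.factorial]
  simp [qq, MM, Y0, Y1]
  ring

lemma W_2_3 : (fun t : ℝ => t^5 * MM t (Real.exp t) 2 3 - qq t (Real.exp t) * (Y0 2 3 + t * Y1 2 3))
    =O[𝓝 0] (fun t : ℝ => t^11) := by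
  refine key _ (fun t => (4320)*t^1 + (4320)*t^3 + (1440)*t^4 + (360)*t^5 + (2)*t^7 + (-1)*t^8)
    (fun t => (-4320)*t^1 + (-4320)*t^3 + (1440)*t^4 + (-360)*t^5)
    (fun t => (1440)*t^1)
    (fun t => (1/6) + (-5041/840)*t^1 + (-7381/5040)*t^2 + (-17/168)*t^3 + (-683/6720)*t^4 + (-1/51840)*t^5 + (-1/453600)*t^6 + (-1/3628800)*t^7)
    (by fun_prop) (by fun_prop) (by fun_prop) (by fun_prop) ?_
  intro t
  simp only [rem, exp_two, exp_three, one_mul, Finset.sum_range_succ, Finset.sum_range_zero,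
    Nat.factorial]
  simp [qq, MM, Y0, Y1]
  ring

lemma W_3_0 : (fun t : ℝ => t^5 * MM t (Real.exp t) 3 0 - qq t (Real.exp t) * (Y0 3 0 + t * Y1 3 0))
    =O[𝓝 0] (fun t : ℝ => t^11) := by
  refine key _ (fun t => (-4320)*t^1 + (-4320)*t^3 + (-1440)*t^4 + (-360)*t^5 + (-4)*t^6 + (-2)*t^8)
    (fun t => (4320)*t^1 + (4320)*t^3 + (-1440)*t^4 + (360)*t^5 + (2)*t^6)
    (fun t => (-1440)*t^1)
    (fun t => (-1/12) + (3821/630)*t^1 + (2507/1680)*t^2 + (1109/10080)*t^3 + (1571/15120)*t^4 + (233/453600)*t^5 + (-1/181440)*t^6 + (-1/1814400)*t^7)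
    (by fun_prop) (by fun_prop) (by fun_prop) (by fun_prop) ?_
  intro t
  simp only [rem, exp_two, exp_three, one_mul, Finset.sum_range_succ, Finset.sum_range_zero,
    Nat.factorial]
  simp [qq, MM, Y0, Y1]
  ring

lemma W_3_1 : (fun t : ℝ => t^5 * MM t (Real.exp t) 3 1 - qq t (Real.exp t) * (Y0 3 1 + t * Y1 3 1))
    =O[𝓝 0] (fun t : ℝ => t^11) := by
  refine key _ (fun t => (-51840) + (38880)*t^1 + (-51840)*t^2 + (21600)*t^3 + (8640)*t^4 + (3232)*t^5 + (4)*t^6 + (-10)*t^7 + (4)*t^8)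
    (fun t => (51840) + (-38880)*t^1 + (51840)*t^2 + (-56160)*t^3 + (17280)*t^4 + (-3236)*t^5)
    (fun t => (-17280) + (12960)*t^1)
    (fun t => (46993/630) + (-45473/1260)*t^1 + (-3743/315)*t^2 + (9839/30240)*t^3 + (-275701/302400)*t^4 + (11/151200)*t^5 + (1/120960)*t^6 + (1/907200)*t^7)
    (by fun_prop) (by fun_prop) (by fun_prop) (by fun_prop) ?_
  intro t
  simp only [rem, exp_two, exp_three, one_mul, Finset.sum_range_succ, Finset.sum_range_zero,
    Nat.factorial]
  simp [qq, MM, Y0, Y1]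
  ring

lemma W_3_2 : (fun t : ℝ => t^5 * MM t (Real.exp t) 3 2 - qq t (Real.exp t) * (Y0 3 2 + t * Y1 3 2))
    =O[𝓝 0] (fun t : ℝ => t^11) := by
  refine key _ (fun t => (4320)*t^1 + (4320)*t^3 + (1440)*t^4 + (360)*t^5 + (2)*t^7 + (-1)*t^8)
    (fun t => (-4320)*t^1 + (-4320)*t^3 + (1440)*t^4 + (-360)*t^5)
    (fun t => (1440)*t^1)
    (fun t => (1/6) + (-5041/840)*t^1 + (-7381/5040)*t^2 + (-17/168)*t^3 + (-683/6720)*t^4 + (-1/51840)*t^5 + (-1/453600)*t^6 + (-1/3628800)*t^7)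
    (by fun_prop) (by fun_prop) (by fun_prop) (by fun_prop) ?_
  intro t
  simp only [rem, exp_two, exp_three, one_mul, Finset.sum_range_succ, Finset.sum_range_zero,
    Nat.factorial]
  simp [qq, MM, Y0, Y1]
  ring

lemma W_3_3 : (fun t : ℝ => t^5 * MM t (Real.exp t) 3 3 - qq t (Real.exp t) * (Y0 3 3 + t * Y1 3 3))
    =O[𝓝 0] (fun t : ℝ => t^11) := by
  refine key _ (fun t => (51840) + (-64800)*t^1 + (51840)*t^2 + (-47520)*t^3 + (-17280)*t^4 + (-5392)*t^5 + (-4)*t^6 + (10)*t^7 + (-4)*t^8 + (1)*t^9)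
    (fun t => (-51840) + (64800)*t^1 + (-51840)*t^2 + (82080)*t^3 + (-25920)*t^4 + (5396)*t^5)
    (fun t => (17280) + (-21600)*t^1)
    (fun t => (-47623/630) + (90863/1260)*t^1 + (1861/90)*t^2 + (8593/30240)*t^3 + (460261/302400)*t^4 + (19/151200)*t^5 + (1/60480)*t^6 + (1/604800)*t^7 + (1/3628800)*t^8)
    (by fun_prop) (by fun_prop) (by fun_prop) (by fun_prop) ?_
  intro t
  simp only [rem, exp_two, exp_three, one_mul, Finset.sum_range_succ, Finset.sum_range_zero,
    Nat.factorial]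
  simp [qq, MM, Y0, Y1]
  ring

lemma NN_mul_MM (t : ℝ) :
    NN t * MM t (Real.exp t) = (dd t * qq t (Real.exp t)) • (1 : Matrix (Fin 4) (Fin 4) ℝ) := by
  ext i j
  rw [Matrix.mul_apply, Fin.sum_univ_four]
  generalize hE : Real.exp t = E
  fin_cases i <;> fin_cases j <;>
    simp [NN, MM, dd, qq, hE] <;> ring

lemma W_all : (fun (t : ℝ) (i j : Fin 4) => t^5 * MM t (Real.exp t) i j
      - qq t (Real.exp t) * (Y0 i j + t * Y1 i j)) =O[𝓝 0] (fun t : ℝ => t^11) := by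
  rw [isBigO_pi]
  intro i
  rw [isBigO_pi]
  intro j
  fin_cases i <;> fin_cases j
  · exact W_0_0
  · exact W_0_1
  · exact W_0_2
  · exact W_0_3
  · exact W_1_0
  · exact W_1_1
  · exact W_1_2
  · exact W_1_3
  · exact W_2_0
  · exact W_2_1
  · exact W_2_2
  · exact W_2_3
  · exact W_3_0
  · exact W_3_1
  · exact W_3_2
  · exact W_3_3

lemma dd_neg {t : ℝ} (h0 : 0 < t) (h1 : t < 1) : dd t < 0 := by
  have := Real.add_one_lt_exp h0.ne'
  unfold dd
  nlinarith

lemma qq_bound : ∃ δ > (0:ℝ), ∀ t ∈ Set.Ioo (0:ℝ) δ, qq t (Real.exp t) ≤ - (t^9/4320) := by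
  obtain ⟨c, hc, h⟩ := qq_bigO.exists_pos
  rw [IsBigOWith, Metric.eventually_nhds_iff] at h
  obtain ⟨ε, hε, h⟩ := h
  refine ⟨min ε (min 1 (1/(4320*c))), by positivity, ?_⟩
  rintro t ⟨h0, h1⟩
  have hε' : t < ε := lt_of_lt_of_le h1 (min_le_left _ _)
  have ht1 : t < 1 := lt_of_lt_of_le h1 ((min_le_right _ _).trans (min_le_left _ _))
  have htc : t < 1/(4320*c) := lt_of_lt_of_le h1 ((min_le_right _ _).trans (min_le_right _ _))
  have hh := h (y := t) (by rw [Real.dist_eq, sub_zero, abs_of_pos h0]; exact hε')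
  rw [Real.norm_eq_abs, Real.norm_eq_abs, abs_of_pos (by positivity : 0 < t^11)] at hh
  have h2 := (abs_le.mp hh).2
  have h3 : c * t ≤ 1/4320 := by
    rw [lt_div_iff₀ (by positivity)] at htc
    linarith
  have h4 : c * t^2 ≤ 1/4320 := by nlinarith [mul_pos hc h0]
  have h5 : c * t^11 ≤ t^9/4320 := by
    have : 0 < t^9 := by positivity
    nlinarith
  have : 0 < t^10 := by positivity
  linarith

theorem t5_Lam_inv_first_order :
    ∃ δ > (0:ℝ), ∃ C > (0:ℝ), ∀ t ∈ Set.Ioo (0:ℝ) δ,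
      IsUnit (Lam t) ∧
      ∀ i j : Fin 4, |(t^5 • (Lam t)⁻¹ - Y0 - t • Y1) i j| ≤ C * t^2 := by
  obtain ⟨δ₁, hδ₁, hq⟩ := qq_bound
  obtain ⟨c, hc, h⟩ := W_all.exists_pos
  rw [IsBigOWith, Metric.eventually_nhds_iff] at h
  obtain ⟨ε, hε, h⟩ := h
  refine ⟨min ε (min 1 δ₁), by positivity, 4320*c, by positivity, ?_⟩
  rintro t ⟨h0, h1⟩
  have hε' : t < ε := lt_of_lt_of_le h1 (min_le_left _ _)
  have ht1 : t < 1 := lt_of_lt_of_le h1 ((min_le_right _ _).trans (min_le_left _ _))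
  have htd : t < δ₁ := lt_of_lt_of_le h1 ((min_le_right _ _).trans (min_le_right _ _))
  have hh := h (y := t) (by rw [Real.dist_eq, sub_zero, abs_of_pos h0]; exact hε')
  have hqt := hq t ⟨h0, htd⟩
  have hd := (dd_neg h0 ht1).ne
  have ht9 : 0 < t^9 := by positivity
  have hqneg : qq t (Real.exp t) < 0 := by linarith
  have hqne := hqneg.ne
  have hmul : Lam t * ((qq t (Real.exp t))⁻¹ • MM t (Real.exp t)) = 1 := by
    rw [Lam, Matrix.smul_mul, Matrix.mul_smul, NN_mul_MM, smul_smul, smul_smul]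
    have : 1 / dd t * (qq t (Real.exp t))⁻¹ * (dd t * qq t (Real.exp t)) = 1 := by
      field_simp
    rw [this, one_smul]
  refine ⟨IsUnit.of_mul_eq_one _ hmul, ?_⟩
  intro i j
  rw [Matrix.inv_eq_right_inv hmul]
  have hW := (norm_le_pi_norm _ j).trans ((norm_le_pi_norm _ i).trans hh)
  rw [Real.norm_eq_abs, Real.norm_eq_abs, abs_of_pos (by positivity : 0 < t^11)] at hW
  have e : (t^5 • ((qq t (Real.exp t))⁻¹ • MM t (Real.exp t)) - Y0 - t • Y1) i j
      = (t^5 * MM t (Real.exp t) i j - qq t (Real.exp t) * (Y0 i j + t * Y1 i j))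
        / qq t (Real.exp t) := by
    simp only [Matrix.sub_apply, Matrix.smul_apply, smul_eq_mul]
    field_simp
    ring
  rw [e, abs_div, abs_of_neg hqneg, div_le_iff₀ (by linarith)]
  refine hW.trans ?_
  have h6 : 0 < c * t^2 := by positivity
  have : 4320 * c * t^2 * (t^9/4320) ≤ 4320 * c * t^2 * (-qq t (Real.exp t)) :=
    mul_le_mul_of_nonneg_left (by linarith) (by positivity)
  nlinarith
end

section
/- Let Λ(t) be the explicit real symmetric 4×4 matrix described in the context and set Y(t) := t⁵·Λ(t)⁻¹ for t > 0 small enough that Λ(t) is invertible; Y(t) is real symmetric, so it has four real eigenvalues counted with multiplicity, which may be listed in decreasing order as λ₁(t) ≥ λ₂(t) ≥ λ₃(t) ≥ λ₄(t). Then there exist δ > 0 and C > 0 such that for all t ∈ (0, δ): |λ₁(t) − 8640| ≤ C·t, |λ₂(t) − 6t³| ≤ C·t⁴, |λ₃(t) − t⁴/3| ≤ C·t⁵, and |λ₄(t) − 3t⁵/8| ≤ C·t⁶. -/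
set_option autoImplicit false
open Real Matrix


/-- `Y(t) = t⁵ Λ(t)⁻¹`. -/
noncomputable def Y (t : ℝ) : Matrix (Fin 4) (Fin 4) ℝ := t^5 • (Lam t)⁻¹


open Filter Topology Asymptotics

noncomputable def Gf (p0 p1 p2 p3 p4 p5 p6 : ℝ → ℝ) (t : ℝ) : ℝ :=
  p0 t + p1 t * Real.exp t + p2 t * Real.exp t ^ 2 + p3 t * Real.exp t ^ 3 +
    p4 t * Real.exp t ^ 4 + p5 t * Real.exp t ^ 5 + p6 t * Real.exp t ^ 6

noncomputable def Tay (n : ℕ) (s : ℝ) : ℝ := ∑ i ∈ Finset.range n, s ^ i / (i.factorial : ℝ)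

lemma exp_rem (p : ℝ → ℝ) (hp : Continuous p) (n j : ℕ) :
    (fun t : ℝ => p t * (Real.exp t ^ j - Tay n (j * t))) =O[𝓝 0] fun t : ℝ => t ^ n := by
  have h1 : p =O[𝓝 0] fun _ : ℝ => (1:ℝ) := hp.continuousAt.isBigO_one ℝ
  have h2 := Real.exp_sub_sum_range_isBigO_pow n
  have hk : Tendsto (fun t : ℝ => (j:ℝ) * t) (𝓝 0) (𝓝 0) := by
    have : Continuous (fun t : ℝ => (j:ℝ) * t) := by fun_prop
    simpa using this.tendsto 0
  have h3 := h2.comp_tendsto hk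
  have h4 : ((fun x : ℝ => x ^ n) ∘ fun t : ℝ => (j:ℝ) * t) =O[𝓝 0] fun t : ℝ => t ^ n := by
    have : ((fun x : ℝ => x ^ n) ∘ fun t : ℝ => (j:ℝ) * t) = fun t => (j:ℝ)^n * t^n := by
      funext t; simp [mul_pow]
    rw [this]
    exact (isBigO_refl _ _).const_mul_left _
  have h5 := h1.mul (h3.trans h4)
  refine h5.congr (fun t => ?_) (fun t => by simp)
  simp only [Function.comp, Tay, Real.exp_nat_mul]

lemma Gf_bigO (p0 p1 p2 p3 p4 p5 p6 q : ℝ → ℝ) (n : ℕ)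
    (h0 : Continuous p0) (h1 : Continuous p1) (h2 : Continuous p2) (h3 : Continuous p3)
    (h4 : Continuous p4) (h5 : Continuous p5) (h6 : Continuous p6) (hq : Continuous q)
    (A : ℝ) (m : ℕ)
    (h : ∀ t : ℝ, p0 t + p1 t * (∑ i ∈ Finset.range n, t ^ i / (i.factorial : ℝ))
      + p2 t * (∑ i ∈ Finset.range n, (2 * t) ^ i / (i.factorial : ℝ))
      + p3 t * (∑ i ∈ Finset.range n, (3 * t) ^ i / (i.factorial : ℝ))
      + p4 t * (∑ i ∈ Finset.range n, (4 * t) ^ i / (i.factorial : ℝ))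
      + p5 t * (∑ i ∈ Finset.range n, (5 * t) ^ i / (i.factorial : ℝ))
      + p6 t * (∑ i ∈ Finset.range n, (6 * t) ^ i / (i.factorial : ℝ)) = A * t ^ m + t ^ n * q t) :
    (fun t : ℝ => Gf p0 p1 p2 p3 p4 p5 p6 t - A * t ^ m) =O[𝓝 0] fun t : ℝ => t ^ n := by
  have hq1 : q =O[𝓝 0] fun _ : ℝ => (1:ℝ) := hq.continuousAt.isBigO_one ℝ
  have hq2 : (fun t : ℝ => t ^ n * q t) =O[𝓝 0] fun t : ℝ => t ^ n := by
    simpa using (isBigO_refl (fun t : ℝ => t ^ n) (𝓝 0)).mul hq1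
  have H := (((((exp_rem p1 h1 n 1).add (exp_rem p2 h2 n 2)).add (exp_rem p3 h3 n 3)).add
    (exp_rem p4 h4 n 4)).add (exp_rem p5 h5 n 5)).add (exp_rem p6 h6 n 6)
  refine (H.add hq2).congr (fun t => ?_) (fun t => rfl)
  have := h t
  simp only [Gf, Tay]
  push_cast
  simp only [one_mul, pow_one]
  linear_combination -this

noncomputable def p00 (t : ℝ) : ℝ := (1) + (-8)*t^1 + (28)*t^2 + (-56)*t^3 + (70)*t^4 + (-56)*t^5 + (28)*t^6 + (-8)*t^7 + (1)*t^8
noncomputable def p01 (t : ℝ) : ℝ := (-4) + (24)*t^1 + (-60)*t^2 + (80)*t^3 + (-60)*t^4 + (24)*t^5 + (-4)*t^6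
noncomputable def p02 (t : ℝ) : ℝ := (6) + (-24)*t^1 + (36)*t^2 + (-24)*t^3 + (6)*t^4
noncomputable def p03 (t : ℝ) : ℝ := (-4) + (8)*t^1 + (-4)*t^2
noncomputable def p04 (t : ℝ) : ℝ := (1)
noncomputable def p05 (t : ℝ) : ℝ := 0
noncomputable def p06 (t : ℝ) : ℝ := 0

lemma G0_bigO : (fun t : ℝ => Gf p00 p01 p02 p03 p04 p05 p06 t - 81 * t^4) =O[𝓝 0] fun t : ℝ => t^5 := by
  refine Gf_bigO _ _ _ _ _ _ _ (fun t : ℝ => (-56) + (58/3)*t^1 + (-44/3)*t^2 + (9/2)*t^3 + (1/3)*t^4 + (-1/6)*t^5) 5 ?_ ?_ ?_ ?_ ?_ ?_ ?_ ?_ _ _ ?_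
  · unfold p00; fun_prop
  · unfold p01; fun_prop
  · unfold p02; fun_prop
  · unfold p03; fun_prop
  · unfold p04; fun_prop
  · unfold p05; fun_prop
  · unfold p06; fun_prop
  · fun_prop
  · intro t
    simp only [Finset.sum_range_succ, Finset.sum_range_zero, Nat.factorial, p00, p01, p02, p03, p04, p05, p06]
    push_cast
    ring

noncomputable def p10 (t : ℝ) : ℝ := (3) + (-19)*t^1 + (50)*t^2 + (-68)*t^3 + (44)*t^4 + (2)*t^5 + (-26)*t^6 + (20)*t^7 + (-7)*t^8 + (1)*t^9
noncomputable def p11 (t : ℝ) : ℝ := (-9) + (38)*t^1 + (-58)*t^2 + (31)*t^3 + (8)*t^4 + (-7)*t^5 + (-14)*t^6 + (17)*t^7 + (-7)*t^8 + (1)*t^9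
noncomputable def p12 (t : ℝ) : ℝ := (6) + (-42)*t^2 + (69)*t^3 + (-36)*t^4 + (-6)*t^5 + (12)*t^6 + (-3)*t^7
noncomputable def p13 (t : ℝ) : ℝ := (6) + (-38)*t^1 + (58)*t^2 + (-31)*t^3 + (3)*t^5
noncomputable def p14 (t : ℝ) : ℝ := (-9) + (19)*t^1 + (-8)*t^2 + (-1)*t^3
noncomputable def p15 (t : ℝ) : ℝ := (3)
noncomputable def p16 (t : ℝ) : ℝ := 0

lemma G1_bigO : (fun t : ℝ => Gf p10 p11 p12 p13 p14 p15 p16 t - 216 * t^4) =O[𝓝 0] fun t : ℝ => t^5 := by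
  refine Gf_bigO _ _ _ _ _ _ _ (fun t : ℝ => (120) + (-79)*t^1 + (-218/3)*t^2 + (-16/3)*t^3 + (17)*t^4 + (15/4)*t^5 + (-47/24)*t^6 + (-1/8)*t^7 + (1/24)*t^8) 5 ?_ ?_ ?_ ?_ ?_ ?_ ?_ ?_ _ _ ?_
  · unfold p10; fun_prop
  · unfold p11; fun_prop
  · unfold p12; fun_prop
  · unfold p13; fun_prop
  · unfold p14; fun_prop
  · unfold p15; fun_prop
  · unfold p16; fun_prop
  · fun_prop
  · intro t
    simp only [Finset.sum_range_succ, Finset.sum_range_zero, Nat.factorial, p10, p11, p12, p13, p14, p15, p16]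
    push_cast
    ring

noncomputable def p20 (t : ℝ) : ℝ := (-3) + (28)*t^1 + (-117)*t^2 + (287)*t^3 + (-456)*t^4 + (489)*t^5 + (-358)*t^6 + (177)*t^7 + (-57)*t^8 + (11)*t^9 + (-1)*t^10
noncomputable def p21 (t : ℝ) : ℝ := (21) + (-142)*t^1 + (421)*t^2 + (-719)*t^3 + (786)*t^4 + (-584)*t^5 + (310)*t^6 + (-123)*t^7 + (37)*t^8 + (-8)*t^9 + (1)*t^10
noncomputable def p22 (t : ℝ) : ℝ := (-52) + (248)*t^1 + (-509)*t^2 + (606)*t^3 + (-487)*t^4 + (292)*t^5 + (-135)*t^6 + (47)*t^7 + (-11)*t^8 + (1)*t^9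
noncomputable def p23 (t : ℝ) : ℝ := (58) + (-172)*t^1 + (219)*t^2 + (-172)*t^3 + (100)*t^4 + (-48)*t^5 + (19)*t^6 + (-3)*t^7
noncomputable def p24 (t : ℝ) : ℝ := (-27) + (28)*t^1 + (-10)*t^2 + (-1)*t^3 + (-7)*t^4 + (3)*t^5
noncomputable def p25 (t : ℝ) : ℝ := (1) + (10)*t^1 + (-4)*t^2 + (-1)*t^3
noncomputable def p26 (t : ℝ) : ℝ := (2)

lemma G2_bigO : (fun t : ℝ => Gf p20 p21 p22 p23 p24 p25 p26 t - 648 * t^5) =O[𝓝 0] fun t : ℝ => t^6 := by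
  refine Gf_bigO _ _ _ _ _ _ _ (fun t : ℝ => (-1067/6) + (367/12)*t^1 + (-4937/20)*t^2 + (1099/20)*t^3 + (913/120)*t^4 + (1397/120)*t^5 + (17/120)*t^6 + (-17/8)*t^7 + (29/120)*t^8 + (1/120)*t^9) 6 ?_ ?_ ?_ ?_ ?_ ?_ ?_ ?_ _ _ ?_
  · unfold p20; fun_prop
  · unfold p21; fun_prop
  · unfold p22; fun_prop
  · unfold p23; fun_prop
  · unfold p24; fun_prop
  · unfold p25; fun_prop
  · unfold p26; fun_prop
  · fun_prop
  · intro t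
    simp only [Finset.sum_range_succ, Finset.sum_range_zero, Nat.factorial, p20, p21, p22, p23, p24, p25, p26]
    push_cast
    ring

noncomputable def p30 (t : ℝ) : ℝ := (-6) + (36)*t^1 + (-93)*t^2 + (138)*t^3 + (-136)*t^4 + (102)*t^5 + (-66)*t^6 + (38)*t^7 + (-18)*t^8 + (6)*t^9 + (-1)*t^10
noncomputable def p31 (t : ℝ) : ℝ := (24) + (-108)*t^1 + (213)*t^2 + (-267)*t^3 + (273)*t^4 + (-249)*t^5 + (183)*t^6 + (-93)*t^7 + (27)*t^8 + (-3)*t^9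
noncomputable def p32 (t : ℝ) : ℝ := (-30) + (72)*t^1 + (-54)*t^2 + (-6)*t^3 + (70)*t^4 + (-135)*t^5 + (159)*t^6 + (-110)*t^7 + (42)*t^8 + (-9)*t^9 + (1)*t^10
noncomputable def p33 (t : ℝ) : ℝ := (72)*t^1 + (-186)*t^2 + (264)*t^3 + (-272)*t^4 + (201)*t^5 + (-87)*t^6 + (21)*t^7 + (-3)*t^8
noncomputable def p34 (t : ℝ) : ℝ := (30) + (-108)*t^1 + (147)*t^2 + (-132)*t^3 + (66)*t^4 + (-15)*t^5 + (3)*t^6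
noncomputable def p35 (t : ℝ) : ℝ := (-24) + (36)*t^1 + (-27)*t^2 + (3)*t^3 + (-1)*t^4
noncomputable def p36 (t : ℝ) : ℝ := (6)

lemma G3_bigO : (fun t : ℝ => Gf p30 p31 p32 p33 p34 p35 p36 t - 108 * t^7) =O[𝓝 0] fun t : ℝ => t^8 := by
  refine Gf_bigO _ _ _ _ _ _ _ (fun t : ℝ => (-39) + (-1259/6)*t^1 + (-95)*t^2 + (22093/210)*t^3 + (-619/840)*t^4 + (-1081/90)*t^5 + (6647/1260)*t^6 + (-1289/1680)*t^7 + (-101/720)*t^8 + (8/315)*t^9) 8 ?_ ?_ ?_ ?_ ?_ ?_ ?_ ?_ _ _ ?_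
  · unfold p30; fun_prop
  · unfold p31; fun_prop
  · unfold p32; fun_prop
  · unfold p33; fun_prop
  · unfold p34; fun_prop
  · unfold p35; fun_prop
  · unfold p36; fun_prop
  · fun_prop
  · intro t
    simp only [Finset.sum_range_succ, Finset.sum_range_zero, Nat.factorial, p30, p31, p32, p33, p34, p35, p36]
    push_cast
    ring

noncomputable def p40 (t : ℝ) : ℝ := (4) + (-24)*t^1 + (60)*t^2 + (-80)*t^3 + (60)*t^4 + (-24)*t^5 + (4)*t^6
noncomputable def p41 (t : ℝ) : ℝ := (-24) + (120)*t^1 + (-264)*t^2 + (356)*t^3 + (-349)*t^4 + (258)*t^5 + (-127)*t^6 + (32)*t^7 + (-3)*t^8 + (2)*t^9 + (-1)*t^10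
noncomputable def p42 (t : ℝ) : ℝ := (60) + (-240)*t^1 + (456)*t^2 + (-592)*t^3 + (592)*t^4 + (-462)*t^5 + (293)*t^6 + (-152)*t^7 + (54)*t^8 + (-10)*t^9 + (1)*t^10
noncomputable def p43 (t : ℝ) : ℝ := (-80) + (240)*t^1 + (-384)*t^2 + (440)*t^3 + (-378)*t^4 + (246)*t^5 + (-109)*t^6 + (24)*t^7 + (-3)*t^8
noncomputable def p44 (t : ℝ) : ℝ := (60) + (-120)*t^1 + (156)*t^2 + (-128)*t^3 + (76)*t^4 + (-18)*t^5 + (3)*t^6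
noncomputable def p45 (t : ℝ) : ℝ := (-24) + (24)*t^1 + (-24)*t^2 + (4)*t^3 + (-1)*t^4
noncomputable def p46 (t : ℝ) : ℝ := (4)

lemma G4_bigO : (fun t : ℝ => Gf p40 p41 p42 p43 p44 p45 p46 t - (1/80) * t^12) =O[𝓝 0] fun t : ℝ => t^13 := by
  refine Gf_bigO _ _ _ _ _ _ _ (fun t : ℝ => (-619/144) + (-40033/7200)*t^1 + (37831/43200)*t^2 + (17291431/19958400)*t^3 + (-728687/2494800)*t^4 + (95803/2177280)*t^5 + (8087/604800)*t^6 + (-247307/79833600)*t^7 + (-1171/34214400)*t^8 + (13/1520640)*t^9) 13 ?_ ?_ ?_ ?_ ?_ ?_ ?_ ?_ _ _ ?_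
  · unfold p40; fun_prop
  · unfold p41; fun_prop
  · unfold p42; fun_prop
  · unfold p43; fun_prop
  · unfold p44; fun_prop
  · unfold p45; fun_prop
  · unfold p46; fun_prop
  · fun_prop
  · intro t
    simp only [Finset.sum_range_succ, Finset.sum_range_zero, Nat.factorial, p40, p41, p42, p43, p44, p45, p46]
    push_cast
    ring

lemma det_sym (x c a b g d e f h i j k : ℝ) :
    (x • !![a, b, g, d; b, e, f, h; g, f, i, j; d, h, j, k] - c • (1 : Matrix (Fin 4) (Fin 4) ℝ)).det
     = x^4 * (!![a, b, g, d; b, e, f, h; g, f, i, j; d, h, j, k]).det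
       - c * x^3 * ((a*e*i + 2*b*f*g - a*f^2 - e*g^2 - i*b^2) + (a*e*k + 2*b*h*d - a*h^2 - e*d^2 - k*b^2)
          + (a*i*k + 2*g*j*d - a*j^2 - i*d^2 - k*g^2) + (e*i*k + 2*f*j*h - e*j^2 - i*h^2 - k*f^2))
       + c^2 * x^2 * (a*e - b^2 + a*i - g^2 + a*k - d^2 + e*i - f^2 + e*k - h^2 + i*k - j^2)
       - c^3 * x * (a + e + i + k) + c^4 := by
  simp [Matrix.det_succ_row_zero, Fin.sum_univ_succ, Fin.succAbove, Matrix.submatrix, Matrix.one_apply]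
  ring

lemma det_sym0 (a b g d e f h i j k : ℝ) :
    (!![a, b, g, d; b, e, f, h; g, f, i, j; d, h, j, k]).det =
      a * (e*i*k + 2*f*j*h - e*j^2 - i*h^2 - k*f^2)
      - b * (b*(i*k - j^2) - f*(g*k-j*d) + h*(g*j-i*d))
      + g * (b*(f*k-j*h) - e*(g*k-j*d) + h*(g*h-f*d))
      - d * (b*(f*j-i*h) - e*(g*j - i*d) + f*(g*h-f*d)) := by
  simp [Matrix.det_succ_row_zero, Fin.sum_univ_succ, Fin.succAbove, Matrix.submatrix]
  ring

lemma detNN (t : ℝ) : (NN t).det = Gf p40 p41 p42 p43 p44 p45 p46 t := by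
  unfold NN
  rw [det_sym0]
  simp only [Gf, p40, p41, p42, p43, p44, p45, p46]
  generalize Real.exp t = e
  ring

lemma det_pencil (t x : ℝ) : (x • NN t - (t^5 * dd t) • (1 : Matrix (Fin 4) (Fin 4) ℝ)).det
     = x^4 * Gf p40 p41 p42 p43 p44 p45 p46 t - t^5 * x^3 * Gf p30 p31 p32 p33 p34 p35 p36 t
       + t^10 * x^2 * Gf p20 p21 p22 p23 p24 p25 p26 t
       - t^15 * x * Gf p10 p11 p12 p13 p14 p15 p16 t + t^20 * Gf p00 p01 p02 p03 p04 p05 p06 t := by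
  rw [← detNN]
  unfold NN dd
  rw [det_sym]
  simp only [Gf, p30, p31, p32, p33, p34, p35, p36, p20, p21, p22, p23, p24, p25, p26,
    p10, p11, p12, p13, p14, p15, p16, p00, p01, p02, p03, p04, p05, p06]
  generalize Real.exp t = e
  congr 1
  · congr 1
    · congr 1
      · congr 1
        ring
      · ring
    · ring
  · ring

lemma root_gen (R : (Fin 7 → ℝ) → ℝ) (hR : Continuous R) (g : ℝ → ℝ) (hgc : Continuous g)
    (K y0 r m : ℝ) (hr : 0 < r) (hm : 0 < m) (hg : ∀ y, |y - y0| ≤ r → m ≤ g y) :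
    ∃ δ > (0:ℝ), ∃ C > (0:ℝ), ∀ b0 b1 b2 b3 b4 t : ℝ, |b0| ≤ K → |b1| ≤ K → |b2| ≤ K → |b3| ≤ K →
      |b4| ≤ K → 0 < t → t < δ → ∃ y, |y - y0| ≤ C * t ∧ |y - y0| ≤ r ∧
        g y * (y - y0) + t * R ![b0, b1, b2, b3, b4, t, y] = 0 := by
  set K' := max K (max 1 (|y0| + r)) with hK'
  obtain ⟨M, hM⟩ := (isCompact_closedBall (0 : Fin 7 → ℝ) K').exists_bound_of_continuousOn hR.continuousOn
  set M' := max M 1 with hM'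
  have hM0 : 0 < M' := lt_of_lt_of_le one_pos (le_max_right _ _)
  have hC : 0 < M' / m := by positivity
  refine ⟨min 1 (r / (M' / m)), by positivity, M' / m, hC, ?_⟩
  intro b0 b1 b2 b3 b4 t h0 h1 h2 h3 h4 ht htd
  have ht1 : t < 1 := lt_of_lt_of_le htd (min_le_left _ _)
  have htr : M' / m * t ≤ r := by
    have := (lt_of_lt_of_le htd (min_le_right _ _)).le
    rw [le_div_iff₀ hC] at this
    linarith
  have hKK : K ≤ K' := le_max_left _ _
  have hK1 : 1 ≤ K' := le_trans (le_max_left _ _) (le_max_right _ _)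
  have hKr : |y0| + r ≤ K' := le_trans (le_max_right _ _) (le_max_right _ _)
  have hb : ∀ y, |y - y0| ≤ r → |R ![b0, b1, b2, b3, b4, t, y]| ≤ M' := by
    intro y hy
    refine le_trans (hM _ ?_) (le_max_left _ _)
    rw [mem_closedBall_zero_iff, pi_norm_le_iff_of_nonneg (by linarith)]
    have hy' : |y| ≤ K' := by
      have : |y| ≤ |y - y0| + |y0| := by simpa using abs_add_le (y - y0) y0
      linarith
    have ht' : |t| ≤ K' := by rw [abs_of_pos ht]; linarith
    intro i
    fin_cases i <;> simp <;> linarith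
  set ρ := M' / m * t with hρ
  have hρ0 : 0 < ρ := by positivity
  have hρm : m * ρ = M' * t := by rw [hρ]; field_simp
  set Q : ℝ → ℝ := fun y => g y * (y - y0) + t * R ![b0, b1, b2, b3, b4, t, y] with hQ
  have hQc : Continuous Q := by
    have : Continuous (fun y : ℝ => ![b0, b1, b2, b3, b4, t, y]) := by
      refine continuous_pi (fun i => ?_)
      fin_cases i <;> simp <;> fun_prop
    fun_prop
  have hlo : Q (y0 - ρ) ≤ 0 := by
    have hh : |y0 - ρ - y0| ≤ r := by
      rw [show y0 - ρ - y0 = -ρ by ring, abs_neg, abs_of_pos hρ0]; exact htr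
    have h1 := hg _ hh
    have h2 := abs_le.1 (hb _ hh)
    simp only [hQ]
    nlinarith [mul_le_mul_of_nonneg_right h1 hρ0.le, mul_le_mul_of_nonneg_left h2.2 ht.le]
  have hhi : 0 ≤ Q (y0 + ρ) := by
    have hh : |y0 + ρ - y0| ≤ r := by
      rw [show y0 + ρ - y0 = ρ by ring, abs_of_pos hρ0]; exact htr
    have h1 := hg _ hh
    have h2 := abs_le.1 (hb _ hh)
    simp only [hQ]
    nlinarith [mul_le_mul_of_nonneg_right h1 hρ0.le, mul_le_mul_of_nonneg_left h2.1 ht.le]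
  obtain ⟨y, hy, hy0⟩ := intermediate_value_Icc (show y0 - ρ ≤ y0 + ρ by linarith)
    hQc.continuousOn ⟨hlo, hhi⟩
  have hyρ : |y - y0| ≤ ρ := by
    rw [abs_le]; exact ⟨by linarith [hy.1], by linarith [hy.2]⟩
  exact ⟨y, hyρ, hyρ.trans htr, hy0⟩

lemma bigO_coef (G : ℝ → ℝ) (A : ℝ) (m : ℕ)
    (h : (fun t : ℝ => G t - A * t^m) =O[𝓝 0] fun t : ℝ => t^(m+1)) :
    ∃ K : ℝ, ∃ δ > (0:ℝ), ∀ t, 0 < t → t < δ → ∃ b, |b| ≤ K ∧ G t = t^m * (A + t * b) := by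
  obtain ⟨K, hK⟩ := h.bound
  obtain ⟨δ, hδ, hh⟩ := Metric.eventually_nhds_iff.1 hK
  refine ⟨K, δ, hδ, fun t ht htd => ⟨(G t - A * t^m) / t^(m+1), ?_, ?_⟩⟩
  · have := hh (y := t) (by simpa [abs_of_pos ht] using htd)
    rw [abs_div, div_le_iff₀ (by positivity)]
    simpa using this
  · field_simp
    ring

lemma charpoly_of_roots (M : Matrix (Fin 4) (Fin 4) ℝ) (lam : Fin 4 → ℝ)
    (hinj : Function.Injective lam) (h : ∀ i, M.charpoly.eval (lam i) = 0) :
    M.charpoly = ∏ i : Fin 4, (Polynomial.X - Polynomial.C (lam i)) := by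
  symm
  have hmon : (∏ i : Fin 4, (Polynomial.X - Polynomial.C (lam i))).Monic :=
    Polynomial.monic_prod_of_monic _ _ (fun i _ => Polynomial.monic_X_sub_C _)
  refine (Polynomial.eq_of_monic_of_dvd_of_natDegree_le hmon M.charpoly_monic ?_ ?_).symm
  · refine Finset.prod_dvd_of_coprime ?_ ?_
    · intro i _ j _ hij
      exact Polynomial.pairwise_coprime_X_sub_C hinj hij
    · intro i _
      exact Polynomial.dvd_iff_isRoot.2 (h i)
  · rw [Matrix.charpoly_natDegree_eq_dim, Polynomial.natDegree_prod_of_monic _ _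
      (fun i _ => Polynomial.monic_X_sub_C _)]
    simp

lemma eval_char (t x : ℝ) (hd : dd t ≠ 0) (hN : (NN t).det ≠ 0)
    (h : (x • NN t - (t^5 * dd t) • (1 : Matrix (Fin 4) (Fin 4) ℝ)).det = 0) :
    (Y t).charpoly.eval x = 0 := by
  have hu : IsUnit (NN t).det := isUnit_iff_ne_zero.2 hN
  have hinv : (Lam t)⁻¹ = dd t • (NN t)⁻¹ := by
    refine Matrix.inv_eq_right_inv ?_
    unfold Lam
    rw [Matrix.smul_mul, Matrix.mul_smul, Matrix.mul_nonsing_inv _ hu, smul_smul]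
    rw [one_div_mul_cancel hd, one_smul]
  rw [Matrix.eval_charpoly]
  have : (Matrix.scalar (Fin 4) x - Y t) * NN t
      = x • NN t - (t^5 * dd t) • (1 : Matrix (Fin 4) (Fin 4) ℝ) := by
    unfold Y
    rw [hinv, sub_mul, smul_smul, Matrix.smul_mul, Matrix.nonsing_inv_mul _ hu]
    congr 1
    simp [Matrix.scalar_apply, ← Matrix.smul_eq_diagonal_mul]
  rw [← this, Matrix.det_mul] at h
  exact (mul_eq_zero.1 h).resolve_right hN

lemma dd_neg_s7 {t : ℝ} (ht : 0 < t) (h : t < 1) : dd t < 0 := by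
  have h1 := Real.add_one_le_exp t
  unfold dd
  nlinarith

lemma lt_aux {s y z B : ℝ} (hs : 0 ≤ s) (hs1 : s ≤ 1) (hy : y ≤ B) (hB : 0 ≤ B) (hz : B < z) :
    s * y < z := by
  have h1 := mul_le_mul_of_nonneg_left hy hs
  have h2 := mul_le_mul_of_nonneg_right hs1 hB
  linarith

lemma lt_aux' {s y z : ℝ} (hs : 0 ≤ s) (hs1 : s ≤ 1/100) (hy : y ≤ 1) (hz : 1/100 < z) :
    s * y < z := by
  have h1 := mul_le_mul_of_nonneg_left hy hs
  linarith

set_option maxHeartbeats 4000000 in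
theorem eigenvalue_expansions :
    ∃ δ > (0:ℝ), ∃ C > (0:ℝ), ∀ t ∈ Set.Ioo (0:ℝ) δ,
      IsUnit (Lam t) ∧
      ∃ lam : Fin 4 → ℝ,
        (∀ i j : Fin 4, i ≤ j → lam j ≤ lam i) ∧
        (Y t).charpoly = ∏ i : Fin 4, (Polynomial.X - Polynomial.C (lam i)) ∧
        |lam 0 - 8640| ≤ C * t ∧
        |lam 1 - 6*t^3| ≤ C * t^4 ∧
        |lam 2 - t^4/3| ≤ C * t^5 ∧
        |lam 3 - 3*t^5/8| ≤ C * t^6 := by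
  obtain ⟨K0, e0, he0, H0⟩ := bigO_coef _ _ _ G0_bigO
  obtain ⟨K1, e1, he1, H1⟩ := bigO_coef _ _ _ G1_bigO
  obtain ⟨K2, e2, he2, H2⟩ := bigO_coef _ _ _ G2_bigO
  obtain ⟨K3, e3, he3, H3⟩ := bigO_coef _ _ _ G3_bigO
  obtain ⟨K4, e4, he4, H4⟩ := bigO_coef _ _ _ G4_bigO
  obtain ⟨K, hK0, hK1, hK2, hK3, hK4, hK⟩ : ∃ K, K0 ≤ K ∧ K1 ≤ K ∧ K2 ≤ K ∧ K3 ≤ K ∧ K4 ≤ K ∧ 1 ≤ K :=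
    ⟨1 + |K0| + |K1| + |K2| + |K3| + |K4|, by
      have h0 := le_abs_self K0
      have h1 := le_abs_self K1
      have h2 := le_abs_self K2
      have h3 := le_abs_self K3
      have h4 := le_abs_self K4
      have h0' := abs_nonneg K0
      have h1' := abs_nonneg K1
      have h2' := abs_nonneg K2
      have h3' := abs_nonneg K3
      have h4' := abs_nonneg K4
      refine ⟨?_, ?_, ?_, ?_, ?_, ?_⟩ <;> linarith⟩
  -- v = (b0, b1, b2, b3, b4, t, y)
  obtain ⟨d1, hd1, C1, hC1, r1⟩ := root_gen
    (fun v => v 4 * (v 6)^4 - v 3 * (v 6)^3 + (v 5)^2 * (648 + v 5 * v 2) * (v 6)^2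
      - (v 5)^6 * (216 + v 5 * v 1) * v 6 + (v 5)^11 * (81 + v 5 * v 0)) (by fun_prop)
    (fun y => y^3 / 80) (by fun_prop) K 8640 1 1 one_pos one_pos (by
      intro y hy
      have := (abs_le.1 hy).1
      have h2 : (80:ℝ) ≤ y := by linarith
      have h3 : (80:ℝ)^3 ≤ y^3 := by gcongr
      linarith)
  obtain ⟨d2, hd2, C2, hC2, r2⟩ := root_gen
    (fun v => -((v 5)^2 * (1/80 + v 5 * v 4) * (v 6)^4 - v 3 * (v 6)^3 + v 2 * (v 6)^2
      - (216 + v 5 * v 1) * v 6 + (v 5)^2 * (81 + v 5 * v 0))) (by fun_prop)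
    (fun y => 108 * y^2) (by fun_prop) K 6 1 1 one_pos one_pos (by
      intro y hy
      have := (abs_le.1 hy).1
      nlinarith)
  obtain ⟨d3, hd3, C3, hC3, r3⟩ := root_gen
    (fun v => (v 5)^4 * (1/80 + v 5 * v 4) * (v 6)^4 - (108 + v 5 * v 3) * (v 6)^3 + v 2 * (v 6)^2
      - v 1 * v 6 + (81 + v 5 * v 0)) (by fun_prop)
    (fun y => 648 * y) (by fun_prop) K (1/3) (1/12) 1 (by norm_num) one_pos (by
      intro y hy
      have := (abs_le.1 hy).1
      linarith)
  obtain ⟨d4, hd4, C4, hC4, r4⟩ := root_gen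
    (fun v => -((v 5)^7 * (1/80 + v 5 * v 4) * (v 6)^4 - (v 5)^2 * (108 + v 5 * v 3) * (v 6)^3
      + (648 + v 5 * v 2) * (v 6)^2 - v 1 * v 6 + v 0)) (by fun_prop)
    (fun _ => 216) (by fun_prop) K (3/8) (1/8) 1 (by norm_num) one_pos (by
      intro y hy
      norm_num)
  set S : Finset ℝ := {e0, e1, e2, e3, e4, d1, d2, d3, d4, 1/100, 1/(200*K)} with hS
  have hSne : S.Nonempty := ⟨e0, by simp [hS]⟩
  have hSpos : ∀ s ∈ S, 0 < s := by
    have : 0 < 1/(200*K) := by positivity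
    intro s hs
    simp only [hS, Finset.mem_insert, Finset.mem_singleton] at hs
    rcases hs with rfl|rfl|rfl|rfl|rfl|rfl|rfl|rfl|rfl|rfl|rfl <;> first | assumption | norm_num
  refine ⟨S.min' hSne, hSpos _ (S.min'_mem hSne), C1 + C2 + C3 + C4, by positivity, ?_⟩
  rintro t ⟨ht, htS⟩
  have hlt : ∀ s ∈ S, t < s := fun s hs => lt_of_lt_of_le htS (S.min'_le s hs)
  obtain ⟨b0, hb0, E0⟩ := H0 t ht (hlt _ (by simp [hS]))
  obtain ⟨b1, hb1, E1⟩ := H1 t ht (hlt _ (by simp [hS]))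
  obtain ⟨b2, hb2, E2⟩ := H2 t ht (hlt _ (by simp [hS]))
  obtain ⟨b3, hb3, E3⟩ := H3 t ht (hlt _ (by simp [hS]))
  obtain ⟨b4, hb4, E4⟩ := H4 t ht (hlt _ (by simp [hS]))
  replace hb0 := hb0.trans hK0
  replace hb1 := hb1.trans hK1
  replace hb2 := hb2.trans hK2
  replace hb3 := hb3.trans hK3
  replace hb4 := hb4.trans hK4
  have ht100 : t < 1/100 := hlt _ (by simp [hS])
  have htK : t * K < 1/200 := by
    have : t < 1/(200*K) := hlt _ (by simp [hS])
    rw [lt_div_iff₀ (by positivity)] at this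
    linarith
  obtain ⟨y1, hy1, hy1', q1⟩ := r1 b0 b1 b2 b3 b4 t hb0 hb1 hb2 hb3 hb4 ht (hlt _ (by simp [hS]))
  obtain ⟨y2, hy2, hy2', q2⟩ := r2 b0 b1 b2 b3 b4 t hb0 hb1 hb2 hb3 hb4 ht (hlt _ (by simp [hS]))
  obtain ⟨y3, hy3, hy3', q3⟩ := r3 b0 b1 b2 b3 b4 t hb0 hb1 hb2 hb3 hb4 ht (hlt _ (by simp [hS]))
  obtain ⟨y4, hy4, hy4', q4⟩ := r4 b0 b1 b2 b3 b4 t hb0 hb1 hb2 hb3 hb4 ht (hlt _ (by simp [hS]))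
  clear r1 r2 r3 r4 H0 H1 H2 H3 H4 hlt htS hSpos
  clear hSne
  clear hS
  clear S
  have hN : (NN t).det ≠ 0 := by
    rw [detNN, E4]
    have : -K ≤ b4 := (abs_le.1 hb4).1
    have h2 : 0 < 1/80 + t * b4 := by
      have := mul_le_mul_of_nonneg_left this ht.le
      linarith
    exact mul_ne_zero (pow_ne_zero _ ht.ne') h2.ne'
  have hd : dd t ≠ 0 := by
    have : dd t < 0 := dd_neg_s7 ht (by linarith)
    exact this.ne
  have hdet : ∀ x, x^4 * (1/80 + t*b4) - x^3 * (108 + t*b3) + t^3 * x^2 * (648 + t*b2)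
      - t^7 * x * (216 + t*b1) + t^12 * (81 + t*b0) = 0 → (Y t).charpoly.eval x = 0 := by
    intro x hx
    refine eval_char t x hd hN ?_
    rw [det_pencil, E0, E1, E2, E3, E4]
    linear_combination t^12 * hx
  refine ⟨?_, ?_⟩
  · rw [Matrix.isUnit_iff_isUnit_det, isUnit_iff_ne_zero]
    unfold Lam
    rw [Matrix.det_smul]
    have : 1 / dd t ≠ 0 := one_div_ne_zero hd
    exact mul_ne_zero (pow_ne_zero _ this) hN
  have o1 : t^3 * y2 < y1 := by
    have a1 := (abs_le.1 hy1').1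
    have a2 := (abs_le.1 hy2').2
    have h3 : t^3 ≤ 1 := pow_le_one₀ ht.le (by linarith)
    exact lt_aux (by positivity) h3 (by linarith : y2 ≤ 7) (by linarith) (by linarith)
  have o2 : t^4 * y3 < t^3 * y2 := by
    have a1 := (abs_le.1 hy2').1
    have a2 := (abs_le.1 hy3').2
    have h3 : 0 < t^3 := by positivity
    have : t * y3 < y2 := lt_aux ht.le (by linarith) (by linarith : y3 ≤ 1) (by linarith) (by linarith)
    calc t^4 * y3 = t^3 * (t * y3) := by ring
      _ < _ := by gcongr
  have o3 : t^5 * y4 < t^4 * y3 := by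
    have a1 := (abs_le.1 hy3').1
    have a2 := (abs_le.1 hy4').2
    have h3 : 0 < t^4 := by positivity
    have : t * y4 < y3 := lt_aux' ht.le ht100.le (by linarith : y4 ≤ 1) (by linarith)
    calc t^5 * y4 = t^4 * (t * y4) := by ring
      _ < _ := by gcongr
  have hanti : StrictAnti ![y1, t^3 * y2, t^4 * y3, t^5 * y4] := by
    rw [Fin.strictAnti_iff_succ_lt]
    intro i
    fin_cases i
    · exact o1
    · exact o2
    · exact o3
  refine ⟨![y1, t^3 * y2, t^4 * y3, t^5 * y4], fun i j hij => hanti.antitone hij, ?_, ?_, ?_, ?_, ?_⟩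
  · refine charpoly_of_roots _ _ hanti.injective ?_
    intro i
    apply hdet
    fin_cases i
    · simp at q1 ⊢
      linear_combination q1
    · simp at q2 ⊢
      linear_combination -t^9 * q2
    · simp at q3 ⊢
      linear_combination t^11 * q3
    · simp at q4 ⊢
      linear_combination -t^12 * q4
  · refine hy1.trans ?_
    gcongr
    linarith
  · show |t^3 * y2 - 6 * t^3| ≤ _
    rw [show t^3 * y2 - 6 * t^3 = t^3 * (y2 - 6) by ring, abs_mul, abs_of_pos (by positivity)]
    calc t^3 * |y2 - 6| ≤ t^3 * (C2 * t) := by gcongr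
      _ = C2 * t^4 := by ring
      _ ≤ _ := by gcongr; linarith
  · show |t^4 * y3 - t^4 / 3| ≤ _
    rw [show t^4 * y3 - t^4 / 3 = t^4 * (y3 - 1/3) by ring, abs_mul, abs_of_pos (by positivity)]
    calc t^4 * |y3 - 1/3| ≤ t^4 * (C3 * t) := by gcongr
      _ = C3 * t^5 := by ring
      _ ≤ _ := by gcongr; linarith
  · show |t^5 * y4 - 3 * t^5 / 8| ≤ _
    rw [show t^5 * y4 - 3 * t^5 / 8 = t^5 * (y4 - 3/8) by ring, abs_mul, abs_of_pos (by positivity)]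
    calc t^5 * |y4 - 3/8| ≤ t^5 * (C4 * t) := by gcongr
      _ = C4 * t^6 := by ring
      _ ≤ _ := by gcongr; linarith
end

section
/- Let Λ(t) be the explicit real symmetric 4×4 matrix described in the context. There exists δ > 0 such that for all t ∈ (0, δ) the matrix Λ(t) is positive definite (hence invertible, with positive definite inverse). -/
set_option autoImplicit false

open Real Matrix

lemma q2_pos (a b c x y : ℝ) (h1 : 0 < a) (h2 : 0 < a*c - b^2) (h : ¬ (x = 0 ∧ y = 0)) :
    0 < a*x^2 + 2*b*x*y + c*y^2 := by
  have key : a * (a*x^2 + 2*b*x*y + c*y^2) = (a*x + b*y)^2 + (a*c - b^2)*y^2 := by ring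
  refine pos_of_mul_pos_right (a := a) ?_ h1.le
  rw [key]
  by_cases hy : y = 0
  · subst hy
    have hx : x ≠ 0 := fun hx => h ⟨hx, rfl⟩
    have : a * x ≠ 0 := mul_ne_zero h1.ne' hx
    have := pow_pos (sq_pos_of_ne_zero this) 1
    simpa using this
  · have := mul_pos h2 (sq_pos_of_ne_zero hy)
    have := sq_nonneg (a*x + b*y)
    linarith

lemma q3_pos (a b c d e f x y z : ℝ) (h1 : 0 < a) (h2 : 0 < a*d - b^2)
    (h3 : 0 < a*(d*f - e^2) - b*(b*f - e*c) + c*(b*e - d*c))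
    (h : ¬ (x = 0 ∧ y = 0 ∧ z = 0)) :
    0 < a*x^2 + 2*b*x*y + 2*c*x*z + d*y^2 + 2*e*y*z + f*z^2 := by
  have key : a * (a*x^2 + 2*b*x*y + 2*c*x*z + d*y^2 + 2*e*y*z + f*z^2) =
      (a*x + b*y + c*z)^2 + ((a*d-b^2)*y^2 + 2*(a*e-b*c)*y*z + (a*f-c^2)*z^2) := by ring
  refine pos_of_mul_pos_right (a := a) ?_ h1.le
  rw [key]
  by_cases hy : y = 0 ∧ z = 0
  · obtain ⟨rfl, rfl⟩ := hy
    have hx : x ≠ 0 := fun hx => h ⟨hx, rfl, rfl⟩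
    have := sq_pos_of_ne_zero (mul_ne_zero h1.ne' hx)
    simpa using this
  · have := q2_pos _ (a*e-b*c) (a*f-c^2) y z h2 (by have := mul_pos h1 h3; linarith) hy
    have := sq_nonneg (a*x + b*y + c*z)
    linarith

lemma q4_pos (a b c d e f g p q r x y z w : ℝ) (h1 : 0 < a) (h2 : 0 < a*e - b^2)
    (h3 : 0 < a*(e*p - f^2) - b*(b*p - f*c) + c*(b*f - e*c))
    (h4 : 0 < (a*e-b^2)*((a*p-c^2)*(a*r-d^2) - (a*q-c*d)^2)
      - (a*f-b*c)*((a*f-b*c)*(a*r-d^2) - (a*q-c*d)*(a*g-b*d))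
      + (a*g-b*d)*((a*f-b*c)*(a*q-c*d) - (a*p-c^2)*(a*g-b*d)))
    (h : ¬ (x = 0 ∧ y = 0 ∧ z = 0 ∧ w = 0)) :
    0 < a*x^2 + 2*b*x*y + 2*c*x*z + 2*d*x*w + e*y^2 + 2*f*y*z + 2*g*y*w + p*z^2 + 2*q*z*w
      + r*w^2 := by
  refine pos_of_mul_pos_right (a := a) ?_ h1.le
  have key : a * (a*x^2 + 2*b*x*y + 2*c*x*z + 2*d*x*w + e*y^2 + 2*f*y*z + 2*g*y*w + p*z^2
      + 2*q*z*w + r*w^2) =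
      (a*x + b*y + c*z + d*w)^2 + ((a*e-b^2)*y^2 + 2*(a*f-b*c)*y*z + 2*(a*g-b*d)*y*w
       + (a*p-c^2)*z^2 + 2*(a*q-c*d)*z*w + (a*r-d^2)*w^2) := by ring
  rw [key]
  by_cases hy : y = 0 ∧ z = 0 ∧ w = 0
  · obtain ⟨rfl, rfl, rfl⟩ := hy
    have hx : x ≠ 0 := fun hx => h ⟨hx, rfl, rfl, rfl⟩
    have := sq_pos_of_ne_zero (mul_ne_zero h1.ne' hx)
    simpa using this
  · have := q3_pos _ (a*f-b*c) (a*g-b*d) (a*p-c^2) (a*q-c*d) (a*r-d^2) y z w h2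
      (by have := mul_pos h1 h3; linarith) h4 hy
    have := sq_nonneg (a*x + b*y + c*z + d*w)
    linarith

lemma exp_low (t : ℝ) (h : 0 ≤ t) :
    1 + t + t^2/2 + t^3/6 + t^4/24 + t^5/120 + t^6/720 + t^7/5040 + t^8/40320 + t^9/362880 ≤ Real.exp t := by
  have := Real.sum_le_exp_of_nonneg h 10
  simp [Finset.sum_range_succ, Nat.factorial] at this
  linarith

lemma exp_up (t : ℝ) (h : 0 ≤ t) (h1 : t ≤ 1) :
    Real.exp t ≤ 1 + t + t^2/2 + t^3/6 + t^4/24 + t^5/120 + t^6/720 + t^7/5040 + t^8/40320 + t^9/362880 + t^10 := by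
  have := Real.exp_bound' h h1 (n := 10) (by norm_num)
  simp [Finset.sum_range_succ, Nat.factorial] at this
  have h10 := pow_nonneg h 10
  linarith

noncomputable def gg3 (t : ℝ) : ℝ := (2)*t^0 + (1/2)*t^1 + (23/180)*t^2 + (1/45)*t^3 + (19/5040)*t^4 + (29/30240)*t^5 + (-2419111/302400)*t^6 + (1209623/302400)*t^7 + (-6803987/680400)*t^8 + (21772811/5443200)*t^9 + (-76204753/76204800)*t^10 + (1/14288400)*t^11 + (1/146313216)*t^12 + (1/1828915200)*t^13 + (1/32920473600)*t^14

noncomputable def gg4 (t : ℝ) : ℝ := (1/2160)*t^0 + (-34559/1440)*t^1 + (-134397/5600)*t^2 + (-2419181/67200)*t^3 + (-2267987/113400)*t^4 + (-3175183/453600)*t^5 + (-838248833/381024000)*t^6 + (-711242239/1016064000)*t^7 + (-1248303881/6096384000)*t^8 + (-1850684131/36578304000)*t^9 + (-1139441171/109734912000)*t^10 + (-5268059595527/438939648000)*t^11 + (-90316661/341397504000)*t^12 + (-221226090623077/18435465216000)*t^13 + (73741759257707/18435465216000)*t^14 + (-442451165183773/442451165184000)*t^15 + (17/442451165184000)*t^16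 + (1/442451165184000)*t^17 + (1/11946181459968000)*t^18

lemma Q3_pos (t L E : ℝ) (hL : L = 1 + t + t^2/2 + t^3/6 + t^4/24 + t^5/120 + t^6/720 + t^7/5040 + t^8/40320 + t^9/362880)
    (ht : 0 < t) (ht1 : t < 1) (hl : L ≤ E) (hu : E ≤ L + t^10) (hg : 0 < gg3 t) :
    0 < 4*E^2 - E*(8-4*t+10*t^2-4*t^3+t^4) + (4-4*t+2*t^2+t^4) := by
  have hL0 : 0 ≤ L := by rw [hL]; positivity
  have hB : 0 ≤ 8-4*t+10*t^2-4*t^3+t^4 := by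
    have : 0 ≤ t^2*(1-t) := mul_nonneg (by positivity) (by linarith)
    have := pow_pos ht 4
    have := pow_pos ht 2
    linarith
  have e1 : L^2 ≤ E^2 := by gcongr
  have e2 : E*(8-4*t+10*t^2-4*t^3+t^4) ≤ (L+t^10)*(8-4*t+10*t^2-4*t^3+t^4) := by gcongr
  have key : 4*L^2 - (L+t^10)*(8-4*t+10*t^2-4*t^3+t^4) + (4-4*t+2*t^2+t^4) = t^4 * gg3 t := by
    rw [hL]; unfold gg3; ring
  have := mul_pos (pow_pos ht 4) hg
  linarith

lemma Q4_pos (t L E : ℝ) (hL : L = 1 + t + t^2/2 + t^3/6 + t^4/24 + t^5/120 + t^6/720 + t^7/5040 + t^8/40320 + t^9/362880)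
    (ht : 0 < t) (ht1 : t < 1) (hl : L ≤ E) (hu : E ≤ L + t^10) (hg : 0 < gg4 t) :
    0 < 4*E^3 - E^2*(12+12*t^2-4*t^3+t^4) + E*(12+12*t^2+4*t^3+t^4) - 4 := by
  have hL0 : 0 ≤ L := by rw [hL]; positivity
  have hE0 : 0 ≤ E := hL0.trans hl
  have hB : 0 ≤ 12+12*t^2-4*t^3+t^4 := by
    have : 0 ≤ t^2*(1-t) := mul_nonneg (by positivity) (by linarith)
    have := pow_pos ht 4
    have := pow_pos ht 2
    linarith
  have e1 : L^3 ≤ E^3 := by gcongr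
  have e2 : E^2*(12+12*t^2-4*t^3+t^4) ≤ (L+t^10)^2*(12+12*t^2-4*t^3+t^4) := by gcongr
  have e3 : L*(12+12*t^2+4*t^3+t^4) ≤ E*(12+12*t^2+4*t^3+t^4) := by gcongr
  have key : 4*L^3 - (L+t^10)^2*(12+12*t^2-4*t^3+t^4) + L*(12+12*t^2+4*t^3+t^4) - 4
      = t^9 * gg4 t := by
    rw [hL]; unfold gg4; ring
  have := mul_pos (pow_pos ht 9) hg
  linarith

lemma gg_pos : ∃ δ > (0:ℝ), ∀ t ∈ Set.Ioo (0:ℝ) δ, t < 1 ∧ 0 < gg3 t ∧ 0 < gg4 t := by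
  have c3 : Continuous gg3 := by unfold gg3; fun_prop
  have c4 : Continuous gg4 := by unfold gg4; fun_prop
  have h1 : ∀ᶠ t in nhds (0:ℝ), t < 1 := eventually_lt_nhds (by norm_num)
  have h3 : ∀ᶠ t in nhds (0:ℝ), 0 < gg3 t :=
    c3.continuousAt.eventually (eventually_gt_nhds (by norm_num [gg3]))
  have h4 : ∀ᶠ t in nhds (0:ℝ), 0 < gg4 t :=
    c4.continuousAt.eventually (eventually_gt_nhds (by norm_num [gg4]))
  obtain ⟨δ, hδ, h⟩ := Metric.eventually_nhds_iff.1 (h1.and (h3.and h4))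
  refine ⟨δ, hδ, fun t ht => h ?_⟩
  rw [Real.dist_eq, sub_zero, abs_of_pos ht.1]
  exact ht.2

lemma form_pos (t E x y z w : ℝ) (ht : 0 < t) (ht1 : t < 1) (hE : 1 + t ≤ E)
    (H3 : 0 < 4*E^2 - E*(8-4*t+10*t^2-4*t^3+t^4) + (4-4*t+2*t^2+t^4))
    (H4 : 0 < 4*E^3 - E^2*(12+12*t^2-4*t^3+t^4) + E*(12+12*t^2+4*t^3+t^4) - 4)
    (h : ¬ (x = 0 ∧ y = 0 ∧ z = 0 ∧ w = 0)) :
    0 < (-(-2*E + 2 - 2*t^2 + t^3))*x^2 + 2*(-(t*(t-2)))*x*y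
      + 2*(-(4*t*E - 4*t + 3*t^2 - t^3 - t^2*E - 2*E + 2))*x*z + 2*(-(t*(t-1-E)))*x*w
      + (-(-E + 1 - t + t^2))*y^2 + 2*(-(t*(t-1-E)))*y*z + 2*(-(-E + 1 - t))*y*w
      + (-(E * (-2*E + 2 - 2*t^2 + t^3)))*z^2 + 2*(-(t*(t-2)*E))*z*w
      + (-(E * (-E + 1 - t + t^2)))*w^2 := by
  have hs : 0 < t^2*(1-t) := mul_pos (by positivity) (by linarith)
  have ht2 : 0 < t^2 := by positivity
  have ht3 : t^2 < t := by nlinarith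
  have hd : 0 < E - 1 + 2*t - t^2 := by linarith
  have p1 : 0 < -(-2*E + 2 - 2*t^2 + t^3) := by linarith
  have p2 : 0 < 2*E - 2 - 2*t + 2*t^2 - t^3 := by linarith
  apply q4_pos _ _ _ _ _ _ _ _ _ _ _ _ _ _ p1 _ _ _ h
  · have := mul_pos hd p2
    linarith
  · have := mul_pos (pow_pos hd 2) H3
    linarith
  · have := mul_pos (pow_pos p1 2) (mul_pos (pow_pos hd 3) H4)
    linarith

theorem Lam_posDef_near_zero :
    ∃ δ > (0:ℝ), ∀ t ∈ Set.Ioo (0:ℝ) δ, (Lam t).PosDef := by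
  obtain ⟨δ, hδ, h⟩ := gg_pos
  refine ⟨δ, hδ, fun t ht => ?_⟩
  obtain ⟨ht1, h3, h4⟩ := h t ht
  have ht0 := ht.1
  have hl := exp_low t ht0.le
  have hu := exp_up t ht0.le ht1.le
  have H3 := Q3_pos t _ _ rfl ht0 ht1 hl hu h3
  have H4 := Q4_pos t _ _ rfl ht0 ht1 hl hu h4
  have hE : 1 + t ≤ Real.exp t := by linarith [Real.add_one_le_exp t]
  have hd : 0 < -dd t := by unfold dd; nlinarith
  rw [Matrix.posDef_iff_dotProduct_mulVec]
  constructor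
  · ext i j
    fin_cases i <;> fin_cases j <;> simp [Lam, NN]
  · intro x hx
    have hx' : ¬ (x 0 = 0 ∧ x 1 = 0 ∧ x 2 = 0 ∧ x 3 = 0) := by
      rintro ⟨h0, h1, h2, h3⟩
      apply hx
      ext i
      fin_cases i <;> assumption
    have key := form_pos t _ _ _ _ _ ht0 ht1 hE H3 H4 hx'
    have := mul_pos (inv_pos.2 hd) key
    refine this.trans_eq ?_
    rw [inv_neg]
    simp only [Lam, NN, Matrix.smul_mulVec, dotProduct, Matrix.mulVec, Fin.sum_univ_four,
      Pi.star_apply, star_trivial, Pi.smul_apply, smul_eq_mul, one_div]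
    simp
    ring
end
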